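/- For n ≥ 3, the Castelnuovo–Mumford regularity of S/I and of S/in_<(I) both equal 3, where I is the join-meet ideal of the diamond lattice D_{n+2} and in_<(I) its initial ideal with respect to the reverse lexicographic order induced by x > y_1 > ⋯ > y_n > z. -/

import Mathlib

open MvPolynomial

noncomputable def xP (K : Type*) [Field K] (n : ℕ) : MvPolynomial (Fin (n + 2)) K := X 0
noncomputable def zP (K : Type*) [Field K] (n : ℕ) : MvPolynomial (Fin (n + 2)) K :=
  X (Fin.last (n + 1))
noncomputable def yP (K : Type*) [Field K] (n : ℕ) (i : Fin n) : MvPolynomial (Fin (n + 2)) K :=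
  X i.succ.castSucc

/-- The join-meet ideal `I` of the diamond lattice `D_{n+2}`. -/
noncomputable def diamondIdeal (K : Type*) [Field K] (n : ℕ) :
    Ideal (MvPolynomial (Fin (n + 2)) K) :=
  Ideal.span {f | ∃ i j : Fin n, i < j ∧ f = yP K n i * yP K n j - xP K n * zP K n}

/-- The initial ideal `in_<(I)` of `I` w.r.t. the reverse lexicographic order induced by
`x > y_1 > ⋯ > y_n > z`, as computed in the paper:
`(y_i y_j : i < j) + (x y_k z : k ≤ n-1) + (x y_n² z)`. -/
noncomputable def diamondIni (K : Type*) [Field K] (n : ℕ) (hn : 1 ≤ n) :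
    Ideal (MvPolynomial (Fin (n + 2)) K) :=
  Ideal.span
    ({f | ∃ i j : Fin n, i < j ∧ f = yP K n i * yP K n j} ∪
      {f | ∃ k : Fin n, (k : ℕ) < n - 1 ∧ f = xP K n * yP K n k * zP K n} ∪
      {xP K n * (yP K n ⟨n - 1, by omega⟩) ^ 2 * zP K n})

def mdeg {σ : Type*} (m : σ →₀ ℕ) : ℕ := m.sum fun _ e => e

/-- A minimal graded free resolution
`⋯ → F_{i+1} → F_i → ⋯ → F_0 → S/I → 0` of `S/I` over `S = K[x_s : s ∈ σ]`.
`F_i` is free with finite homogeneous basis `B i`, the basis element `b : B i` having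
degree `deg i b`; the differentials are graded and have entries in the graded maximal
ideal (minimality); `ε` is a lift of the augmentation `F_0 → S/I`. -/
structure MinGradedFreeRes (K : Type*) [Field K] (σ : Type*) (I : Ideal (MvPolynomial σ K)) where
  B : ℕ → Type
  finB : ∀ i, Finite (B i)
  deg : ∀ i, B i → ℕ
  d : ∀ i, ((B (i + 1)) →₀ MvPolynomial σ K) →ₗ[MvPolynomial σ K] ((B i) →₀ MvPolynomial σ K)
  ε : ((B 0) →₀ MvPolynomial σ K) →ₗ[MvPolynomial σ K] MvPolynomial σ K
  ε_homog : ∀ b : B 0, (ε (Finsupp.single b 1)).IsHomogeneous (deg 0 b)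
  surj : ∀ s : MvPolynomial σ K, ∃ t, ε t - s ∈ I
  exact0 : LinearMap.range (d 0) = Submodule.comap ε (I : Submodule _ _)
  exact : ∀ i, LinearMap.range (d (i + 1)) = LinearMap.ker (d i)
  homog : ∀ i (b : B (i + 1)) (c : B i),
    ∀ m ∈ ((d i (Finsupp.single b 1)) c).support, mdeg m + deg i c = deg (i + 1) b
  minimal : ∀ i (b : B (i + 1)) (c : B i), coeff 0 ((d i (Finsupp.single b 1)) c) = 0

/-- The graded Betti number `β_{i,j}(S/I)` read off from a minimal graded free resolution:
the number of basis elements of `F_i` of degree `j`. -/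
noncomputable def MinGradedFreeRes.betti {K : Type*} [Field K] {σ : Type*}
    {I : Ideal (MvPolynomial σ K)} (F : MinGradedFreeRes K σ I) (i j : ℕ) : ℕ :=
  Nat.card {b : F.B i // F.deg i b = j}

/-- `reg(S/I) = r`: in any minimal graded free resolution all shifts satisfy `j - i ≤ r`,
with equality attained, i.e. `max { j - i : β_{i,j}(S/I) ≠ 0 } = r`. -/
def RegEq {K : Type*} [Field K] {σ : Type*} (I : Ideal (MvPolynomial σ K)) (r : ℕ) : Prop :=
  Nonempty (MinGradedFreeRes K σ I) ∧
    ∀ F : MinGradedFreeRes K σ I,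
      (∀ i (b : F.B i), F.deg i b ≤ i + r) ∧ (∃ i, ∃ b : F.B i, F.deg i b = i + r)

/-!
Put `S = K[x, y_1, …, y_n, z]`, with maximal ideal `𝔪`, and let `I` be the join-meet ideal or its
initial ideal. In both cases `I + (xz)` is the same ideal `J = (xz, y_i y_j : i ≠ j)` of a union of
coordinate planes, and `P = I : xz` is generated by linear forms and one quadric
`q = y_p² - ε xz` on a linear space with coordinates `x`, `y_p`, `z`: all `y_i` are equal and
`ε = 1` for the join-meet ideal, while all `y_i` but `y_n` vanish and `ε = 0` for the initial ideal.

Regularity of a sequence on `S/I` follows from its regularity on `S/J` and `S/P`, and `(I : xz)`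
then commutes with adding the sequence. It applies to `θ = (x - z, y_1 + ⋯ + y_n + γz)` when
`γ² ≠ ε c²`, where `c` is the value of `y_1 + ⋯ + y_n` at `y_p = 1`; such a `γ ∈ {0, 1}` exists over
every field. Hence `reg S/I` is the top degree of `S/(I + (θ))`. That degree is at most `3`, as
`𝔪² ⊆ J + (θ) + z𝔪` and `𝔪² ⊆ P + (θ)` give `𝔪⁴ ⊆ I + (θ) + z²𝔪²` and
`z²𝔪² ⊆ xz(P + (θ)) + (θ) ⊆ I + (θ)`. It is at least `3`, as `xz𝔪 ⊆ I + (θ)` would mean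
`𝔪 ⊆ P + (θ)`.
-/

theorem sup_pow_le {R : Type*} [CommSemiring R] (I J : Ideal R) (r : ℕ) :
    (I ⊔ J) ^ r ≤ I ⊔ J ^ r := by
  induction r with
  | zero => simp
  | succ r ih =>
    calc (I ⊔ J) ^ (r + 1) ≤ (I ⊔ J ^ r) * (I ⊔ J) := by
          rw [pow_succ]
          exact Ideal.mul_mono_left ih
      _ ≤ I ⊔ J ^ (r + 1) := by
          rw [Ideal.sup_mul, Ideal.mul_sup (J ^ r), ← pow_succ]
          refine sup_le (Ideal.mul_le_left.trans le_sup_left) (sup_le ?_ le_sup_right)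
          exact Ideal.mul_le_right.trans le_sup_left

theorem notMem_of_le_ker {R S F : Type*} [Semiring R] [Semiring S] [FunLike F R S]
    [RingHomClass F R S] {φ : F} {I : Ideal R} {f : R} (hI : I ≤ RingHom.ker φ) (hf : φ f ≠ 0) :
    f ∉ I :=
  fun h ↦ hf (RingHom.mem_ker.mp (hI h))

section RegularQuotient

variable {R : Type*} [CommRing R] {I J : Ideal R} {l q : R} {θ : List R}

theorem mem_sup_span_singleton {f : R} : f ∈ I ⊔ Ideal.span {l} ↔ ∃ a, f - a * l ∈ I := by
  rw [sup_comm, Ideal.mem_span_singleton_sup]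
  exact ⟨fun ⟨a, b, hb, h⟩ ↦ ⟨a, by rwa [← h, add_sub_cancel_left]⟩,
    fun ⟨a, ha⟩ ↦ ⟨a, _, ha, add_sub_cancel _ _⟩⟩

theorem sup_span_singleton_eq_left (hl : l ∈ I) : I ⊔ Ideal.span {l} = I :=
  sup_eq_left.mpr ((Ideal.span_singleton_le_iff_mem I).mpr hl)

theorem sup_ofList_cons (l : R) (θ : List R) :
    I ⊔ Ideal.ofList (l :: θ) = I ⊔ Ideal.span {l} ⊔ Ideal.ofList θ := by
  rw [Ideal.ofList_cons, sup_assoc]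

theorem isSMulRegular_quotient_of_notMem (hI : I.IsPrime) (hl : l ∉ I) :
    IsSMulRegular (R ⧸ I) l :=
  (isSMulRegular_quotient_iff_mem_of_smul_mem I l).mpr fun _ h ↦
    (hI.mem_or_mem h).resolve_left hl

theorem isWeaklyRegular_quotient_cons_iff :
    RingTheory.Sequence.IsWeaklyRegular (R ⧸ I) (l :: θ) ↔
      IsSMulRegular (R ⧸ I) l ∧
        RingTheory.Sequence.IsWeaklyRegular (R ⧸ (I ⊔ Ideal.span {l})) θ := by
  open Pointwise in
  have hmap : l • (⊤ : Submodule R (R ⧸ I)) = Submodule.map I.mkQ (Ideal.span {l}) := by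
    rw [← Submodule.ideal_span_singleton_smul, ← Submodule.range_mkQ I, LinearMap.range_eq_map,
      ← Submodule.map_smul'', smul_eq_mul, Ideal.mul_top]
  rw [RingTheory.Sequence.isWeaklyRegular_cons_iff]
  refine and_congr_right fun _ ↦ LinearEquiv.isWeaklyRegular_congr ?_ θ
  exact (Submodule.quotEquivOfEq _ _ hmap).trans
    (Submodule.quotientQuotientEquivQuotientSup I (Ideal.span {l}))

theorem isSMulRegular_quotient_of_sup_of_colon
    (hsup : IsSMulRegular (R ⧸ (I ⊔ Ideal.span {q})) l)
    (hcolon : IsSMulRegular (R ⧸ (I.colon {q} : Ideal R)) l) : IsSMulRegular (R ⧸ I) l := by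
  refine (isSMulRegular_quotient_iff_mem_of_smul_mem I l).mpr fun f hf ↦ ?_
  obtain ⟨a, ha⟩ := mem_sup_span_singleton.mp
    (mem_of_isSMulRegular_quotient_of_smul_mem hsup (Ideal.mem_sup_left hf))
  have haq : a ∈ I.colon {q} := by
    refine mem_of_isSMulRegular_quotient_of_smul_mem hcolon (Submodule.mem_colon_singleton.mpr ?_)
    simp only [smul_eq_mul] at hf ⊢
    convert I.sub_mem hf (I.mul_mem_left l ha) using 1
    ring
  simpa using I.add_mem ha (Submodule.mem_colon_singleton.mp haq)

theorem sup_span_singleton_colon (hsup : IsSMulRegular (R ⧸ (I ⊔ Ideal.span {q})) l) :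
    (I ⊔ Ideal.span {l}).colon {q} = I.colon {q} ⊔ Ideal.span {l} := by
  ext f
  simp only [mem_sup_span_singleton, Submodule.mem_colon_singleton, smul_eq_mul]
  constructor
  · rintro ⟨a, ha⟩
    have hla : l • a ∈ I ⊔ Ideal.span {q} :=
      mem_sup_span_singleton.mpr ⟨f, by convert I.neg_mem ha using 1; rw [smul_eq_mul]; ring⟩
    obtain ⟨c, hc⟩ :=
      mem_sup_span_singleton.mp (mem_of_isSMulRegular_quotient_of_smul_mem hsup hla)
    exact ⟨c, by convert I.add_mem ha (I.mul_mem_left l hc) using 1; ring⟩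
  · rintro ⟨a, ha⟩
    exact ⟨a * q, by convert ha using 1; ring⟩

theorem isWeaklyRegular_quotient_of_sup_of_colon
    (hsup : RingTheory.Sequence.IsWeaklyRegular (R ⧸ (I ⊔ Ideal.span {q})) θ)
    (hcolon : RingTheory.Sequence.IsWeaklyRegular (R ⧸ (I.colon {q} : Ideal R)) θ) :
    RingTheory.Sequence.IsWeaklyRegular (R ⧸ I) θ := by
  induction θ generalizing I with
  | nil => exact .nil R _
  | cons l θ ih =>
    rw [isWeaklyRegular_quotient_cons_iff] at hsup hcolon ⊢
    refine ⟨isSMulRegular_quotient_of_sup_of_colon hsup.1 hcolon.1, ih ?_ ?_⟩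
    · rw [sup_right_comm]
      exact hsup.2
    · rw [sup_span_singleton_colon hsup.1]
      exact hcolon.2

theorem sup_ofList_colon
    (hsup : RingTheory.Sequence.IsWeaklyRegular (R ⧸ (I ⊔ Ideal.span {q})) θ) :
    (I ⊔ Ideal.ofList θ).colon {q} = I.colon {q} ⊔ Ideal.ofList θ := by
  induction θ generalizing I with
  | nil => simp only [Ideal.ofList_nil, sup_bot_eq]
  | cons l θ ih =>
    rw [isWeaklyRegular_quotient_cons_iff] at hsup
    rw [sup_ofList_cons, sup_ofList_cons, ← sup_span_singleton_colon hsup.1, ih]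
    rw [sup_right_comm]
    exact hsup.2

theorem colon_singleton_eq (hle : I ≤ J) (hmul : ∀ f ∈ J, f * q ∈ I)
    (hq : IsSMulRegular (R ⧸ J) q) : I.colon {q} = J := by
  ext f
  rw [Submodule.mem_colon_singleton, smul_eq_mul]
  exact ⟨fun h ↦ mem_of_isSMulRegular_quotient_of_smul_mem hq
    (by rw [smul_eq_mul, mul_comm]; exact hle h), hmul f⟩

theorem isSMulRegular_quotient_sup_swap (hl : IsSMulRegular (R ⧸ I) l)
    (hq : IsSMulRegular (R ⧸ (I ⊔ Ideal.span {l})) q) :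
    IsSMulRegular (R ⧸ (I ⊔ Ideal.span {q})) l := by
  simp only [isSMulRegular_quotient_iff_mem_of_smul_mem, mem_sup_span_singleton,
    smul_eq_mul] at hl hq ⊢
  rintro f ⟨a, ha⟩
  obtain ⟨b, hb⟩ := hq a ⟨f, by convert I.neg_mem ha using 1; ring⟩
  exact ⟨b, hl _ (by convert I.add_mem ha (I.mul_mem_left q hb) using 1; ring)⟩

end RegularQuotient

section SMulTop

variable {R B M : Type*} [CommRing R] [AddCommGroup M] [Module R M] {I : Ideal R} {l : R}

theorem exists_add_smul_eq_of_mem_sup_smul_top {f : M}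
    (hf : f ∈ (I ⊔ Ideal.span {l}) • (⊤ : Submodule R M)) :
    ∃ u ∈ I • (⊤ : Submodule R M), ∃ w, u + l • w = f := by
  rw [Submodule.sup_smul, Submodule.ideal_span_singleton_smul] at hf
  obtain ⟨u, hu, v, hv, huv⟩ := Submodule.mem_sup.mp hf
  obtain ⟨w, -, rfl⟩ := (Submodule.mem_smul_pointwise_iff_exists _ _ _).mp hv
  exact ⟨u, hu, w, huv⟩

theorem mem_smul_top_finsupp_iff {f : B →₀ R} :
    f ∈ I • (⊤ : Submodule R (B →₀ R)) ↔ ∀ b, f b ∈ I := by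
  constructor
  · intro hf b
    have := Submodule.smul_top_le_comap_smul_top I (Finsupp.lapply b) hf
    rwa [smul_eq_mul, Ideal.mul_top] at this
  · intro hf
    rw [← Finsupp.sum_single f]
    refine Submodule.sum_mem _ fun b _ ↦ ?_
    rw [← Finsupp.smul_single_one]
    exact Submodule.smul_mem_smul (hf b) Submodule.mem_top

theorem mem_smul_top_finsupp_of_smul_mem (hl : IsSMulRegular (R ⧸ I) l) {f : B →₀ R}
    (hf : l • f ∈ I • (⊤ : Submodule R (B →₀ R))) : f ∈ I • (⊤ : Submodule R (B →₀ R)) := by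
  rw [mem_smul_top_finsupp_iff] at hf ⊢
  exact fun b ↦ mem_of_isSMulRegular_quotient_of_smul_mem hl (hf b)

end SMulTop

attribute [local instance] MvPolynomial.gradedAlgebra

section LinearIdeal

variable {σ K : Type*} [Field K]

/-- An ideal of a polynomial ring generated by linear forms, such as the ideals of the coordinate
subspaces and of the rational points through which regularity of sequences is tested below. -/
def IsLinearIdeal (L : Ideal (MvPolynomial σ K)) : Prop :=
  ∃ s : Set (MvPolynomial σ K), (∀ f ∈ s, f.IsHomogeneous 1) ∧ L = Ideal.span s

theorem isHomogeneous_span {s : Set (MvPolynomial σ K)} (hs : ∀ f ∈ s, ∃ d, f.IsHomogeneous d) :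
    (Ideal.span s).IsHomogeneous (homogeneousSubmodule σ K) :=
  Ideal.homogeneous_span _ _ hs

namespace IsLinearIdeal

variable {L L' : Ideal (MvPolynomial σ K)} {l q : MvPolynomial σ K} {θ : List (MvPolynomial σ K)}

theorem isHomogeneous (hL : IsLinearIdeal L) : L.IsHomogeneous (homogeneousSubmodule σ K) := by
  obtain ⟨s, hs, rfl⟩ := hL
  exact isHomogeneous_span fun f hf ↦ ⟨1, hs f hf⟩

theorem ofList (hθ : ∀ l ∈ θ, l.IsHomogeneous 1) : IsLinearIdeal (Ideal.ofList θ) :=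
  ⟨{l | l ∈ θ}, hθ, rfl⟩

theorem bot : IsLinearIdeal (⊥ : Ideal (MvPolynomial σ K)) :=
  ⟨∅, by simp, Ideal.span_empty.symm⟩

theorem sup (hL : IsLinearIdeal L) (hL' : IsLinearIdeal L') : IsLinearIdeal (L ⊔ L') := by
  obtain ⟨s, hs, rfl⟩ := hL
  obtain ⟨t, ht, rfl⟩ := hL'
  exact ⟨s ∪ t, fun f hf ↦ hf.elim (hs f) (ht f), (Ideal.span_union s t).symm⟩

theorem sup_span_singleton (hL : IsLinearIdeal L) (hl : l.IsHomogeneous 1) :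
    IsLinearIdeal (L ⊔ Ideal.span {l}) :=
  hL.sup ⟨{l}, by simpa, rfl⟩

/-- Substituting `X v - π (X v)`, for a linear projection `π` onto the span of the generators,
defines an endomorphism of the polynomial ring whose kernel is the ideal. -/
theorem exists_ker_eq (hL : IsLinearIdeal L) :
    ∃ φ : MvPolynomial σ K →ₐ[K] MvPolynomial σ K, RingHom.ker φ = L := by
  obtain ⟨s, hs, rfl⟩ := hL
  obtain ⟨π, hπ⟩ := (Submodule.span K s).subtype.exists_leftInverse_of_injective
    (Submodule.ker_subtype _)
  have hπs : ∀ w ∈ s, (π w : MvPolynomial σ K) = w := fun w hw ↦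
    congrArg Subtype.val (LinearMap.congr_fun hπ ⟨w, Submodule.subset_span hw⟩)
  have hπ_mem : ∀ f, (π f : MvPolynomial σ K) ∈ Ideal.span s := fun f ↦
    Submodule.span_le_restrictScalars K _ s (π f).2
  let φ : MvPolynomial σ K →ₐ[K] MvPolynomial σ K :=
    aeval fun v ↦ X v - (π (X v) : MvPolynomial σ K)
  have hφ_linear : ∀ f : MvPolynomial σ K, f.IsHomogeneous 1 →
      φ f = f - (π f : MvPolynomial σ K) := by
    intro f hf
    have hf' : f ∈ Submodule.span K (Set.range (X : σ → MvPolynomial σ K)) := by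
      rwa [← homogeneousSubmodule_one_eq_span_X]
    have hvar : Set.EqOn φ.toLinearMap
        (LinearMap.id - (Submodule.span K s).subtype ∘ₗ π : MvPolynomial σ K →ₗ[K] _)
        (Set.range X) := by
      rintro _ ⟨v, rfl⟩
      simp [φ]
    exact LinearMap.eqOn_span hvar hf'
  have hφ_mod : (Ideal.Quotient.mkₐ K (Ideal.span s)).comp φ = Ideal.Quotient.mkₐ K _ := by
    ext v
    have : φ (X v) - X v ∈ Ideal.span s := by
      simpa [φ] using hπ_mem (X v)
    exact Ideal.Quotient.eq.mpr this
  refine ⟨φ, le_antisymm (fun f hf ↦ ?_) (Ideal.span_le.mpr fun f hf ↦ ?_)⟩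
  · rw [← Ideal.Quotient.eq_zero_iff_mem, ← Ideal.Quotient.mkₐ_eq_mk K, ← hφ_mod,
      AlgHom.comp_apply, (RingHom.mem_ker).mp hf, map_zero]
  · rw [SetLike.mem_coe, RingHom.mem_ker, hφ_linear f (hs f hf), hπs f hf, sub_self]

theorem isPrime (hL : IsLinearIdeal L) : L.IsPrime := by
  obtain ⟨φ, rfl⟩ := hL.exists_ker_eq
  exact RingHom.ker_isPrime φ

theorem isSMulRegular_quotient (hL : IsLinearIdeal L) (hq : q ∉ L) :
    IsSMulRegular (MvPolynomial σ K ⧸ L) q :=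
  isSMulRegular_quotient_of_notMem hL.isPrime hq

theorem isWeaklyRegular_quotient_sup_span_singleton (hL : IsLinearIdeal L)
    (hθ : ∀ l ∈ θ, l.IsHomogeneous 1)
    (hreg : RingTheory.Sequence.IsWeaklyRegular (MvPolynomial σ K ⧸ L) θ)
    (hq : q ∉ L ⊔ Ideal.ofList θ) :
    RingTheory.Sequence.IsWeaklyRegular (MvPolynomial σ K ⧸ (L ⊔ Ideal.span {q})) θ := by
  induction θ generalizing L with
  | nil => exact .nil _ _
  | cons l θ ih =>
    rw [List.forall_mem_cons] at hθ
    rw [sup_ofList_cons] at hq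
    rw [isWeaklyRegular_quotient_cons_iff] at hreg ⊢
    have hLl := hL.sup_span_singleton hθ.1
    refine ⟨isSMulRegular_quotient_sup_swap hreg.1
      (hLl.isSMulRegular_quotient fun h ↦ hq (Ideal.mem_sup_left h)), ?_⟩
    rw [sup_right_comm]
    exact ih hLl hθ.2 hreg.2 hq

end IsLinearIdeal

end LinearIdeal

section Grading

variable {σ R B B' : Type*} [CommRing R] {deg : B → ℕ} {L : Ideal (MvPolynomial σ R)}

theorem mdeg_eq_degree (m : σ →₀ ℕ) : mdeg m = m.degree := rfl

/-- The degree `j` part of a polynomial, seen as a multiple of a generator of degree `a`: its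
homogeneous component of degree `j - a`, and `0` if `j < a`. -/
noncomputable def shiftedComponent (a j : ℕ) : MvPolynomial σ R →ₗ[R] MvPolynomial σ R :=
  if a ≤ j then homogeneousComponent (j - a) else 0

theorem coeff_shiftedComponent (a j : ℕ) (m : σ →₀ ℕ) (f : MvPolynomial σ R) :
    coeff m (shiftedComponent a j f) = if mdeg m + a = j then coeff m f else 0 := by
  by_cases h : a ≤ j
  · rw [shiftedComponent, if_pos h, coeff_homogeneousComponent, mdeg_eq_degree]
    exact if_congr (by omega) rfl rfl
  · rw [shiftedComponent, if_neg h, LinearMap.zero_apply, coeff_zero, if_neg (by omega)]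

theorem shiftedComponent_mul {a b : ℕ} (j : ℕ) (f : MvPolynomial σ R) {p : MvPolynomial σ R}
    (hp : ∀ m ∈ p.support, mdeg m + a = b) :
    shiftedComponent a j (f * p) = shiftedComponent b j f * p := by
  classical
  ext m
  rw [coeff_shiftedComponent, coeff_mul, coeff_mul, ← Finset.sum_const_zero,
    ← Finset.sum_ite_irrel]
  refine Finset.sum_congr rfl fun x hx ↦ ?_
  rw [coeff_shiftedComponent, ite_mul, zero_mul]
  by_cases hx₂ : coeff x.2 p = 0
  · simp only [hx₂, mul_zero, ite_self]
  · have hdeg : mdeg m = mdeg x.1 + mdeg x.2 := by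
      rw [← Finset.HasAntidiagonal.mem_antidiagonal.mp hx, mdeg_eq_degree, map_add]
      rfl
    have := hp x.2 (mem_support_iff.mpr hx₂)
    exact if_congr (by omega) rfl rfl

theorem mdeg_eq_of_mem_support {d : ℕ} {p : MvPolynomial σ R} (hp : p.IsHomogeneous d) :
    ∀ m ∈ p.support, mdeg m = d := fun _ hm ↦
  not_imp_comm.mp hp.coeff_eq_zero (mem_support_iff.mp hm)

theorem shiftedComponent_zero_left (j : ℕ) (f : MvPolynomial σ R) :
    shiftedComponent 0 j f = homogeneousComponent j f := by
  rw [shiftedComponent, if_pos j.zero_le, Nat.sub_zero]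

theorem shiftedComponent_mem (hL : L.IsHomogeneous (homogeneousSubmodule σ R)) {a j : ℕ}
    {f : MvPolynomial σ R} (hf : f ∈ L) : shiftedComponent a j f ∈ L := by
  unfold shiftedComponent
  split_ifs
  · exact homogeneousComponent_mem_of_mem hL hf _
  · exact L.zero_mem

theorem shiftedComponent_linear_mul {a j : ℕ} {l : MvPolynomial σ R} (hl : l.IsHomogeneous 1)
    (f : MvPolynomial σ R) :
    shiftedComponent a (j + 1) (l * f) = l * shiftedComponent a j f := by
  rw [mul_comm, shiftedComponent_mul (b := a + 1) (j + 1) f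
    fun m hm ↦ by rw [mdeg_eq_of_mem_support hl m hm, add_comm], mul_comm]
  congr 1
  ext m
  simp only [coeff_shiftedComponent]
  exact if_congr (by omega) rfl rfl

theorem mem_idealOfVars_iff {f : MvPolynomial σ R} : f ∈ idealOfVars σ R ↔ coeff 0 f = 0 := by
  rw [← pow_one (idealOfVars σ R), mem_pow_idealOfVars_iff']
  simp only [Nat.lt_one_iff, Finsupp.degree_eq_zero_iff, forall_eq]

/-- The degree `j` part of an element of the free module whose basis element `b` has degree
`deg b`. -/
noncomputable def degreePart (deg : B → ℕ) (j : ℕ) :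
    (B →₀ MvPolynomial σ R) →ₗ[R] (B →₀ MvPolynomial σ R) :=
  Finsupp.lsum R fun b ↦ Finsupp.lsingle b ∘ₗ shiftedComponent (deg b) j

theorem degreePart_single (j : ℕ) (b : B) (p : MvPolynomial σ R) :
    degreePart deg j (Finsupp.single b p) = Finsupp.single b (shiftedComponent (deg b) j p) := by
  simp [degreePart]

theorem degreePart_apply (j : ℕ) (f : B →₀ MvPolynomial σ R) (b : B) :
    degreePart deg j f b = shiftedComponent (deg b) j (f b) := by
  classical
  induction f using Finsupp.induction_linear with
  | zero => simp
  | add f g hf hg => simp only [map_add, Finsupp.add_apply, hf, hg]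
  | single c p =>
    rw [degreePart_single, Finsupp.single_apply, Finsupp.single_apply]
    split_ifs with h
    · rw [h]
    · rw [map_zero]

theorem degreePart_degreePart (j : ℕ) (f : B →₀ MvPolynomial σ R) :
    degreePart deg j (degreePart deg j f) = degreePart deg j f := by
  ext b m
  simp only [degreePart_apply, coeff_shiftedComponent]
  split_ifs <;> rfl

theorem degreePart_linear_smul (j : ℕ) {l : MvPolynomial σ R} (hl : l.IsHomogeneous 1)
    (f : B →₀ MvPolynomial σ R) : degreePart deg (j + 1) (l • f) = l • degreePart deg j f := by
  ext1 b
  simp only [degreePart_apply, Finsupp.smul_apply, smul_eq_mul, shiftedComponent_linear_mul hl]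

theorem degreePart_mem_smul_top (hL : L.IsHomogeneous (homogeneousSubmodule σ R)) {j : ℕ}
    {f : B →₀ MvPolynomial σ R}
    (hf : f ∈ L • (⊤ : Submodule (MvPolynomial σ R) (B →₀ MvPolynomial σ R))) :
    degreePart deg j f ∈ L • (⊤ : Submodule (MvPolynomial σ R) (B →₀ MvPolynomial σ R)) := by
  rw [mem_smul_top_finsupp_iff] at hf ⊢
  intro b
  rw [degreePart_apply]
  exact shiftedComponent_mem hL (hf b)

theorem exists_sum_degreePart_eq (deg : B → ℕ) (f : B →₀ MvPolynomial σ R) :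
    ∃ s : Finset ℕ, ∑ j ∈ s, degreePart deg j f = f := by
  classical
  refine ⟨f.support.biUnion fun b ↦ (f b).support.image fun m ↦ mdeg m + deg b, ?_⟩
  ext b m
  simp only [Finsupp.finsetSum_apply, coeff_sum, degreePart_apply, coeff_shiftedComponent,
    Finset.sum_ite_eq]
  refine ite_eq_left_iff.mpr fun hmem ↦ ?_
  by_contra hm
  refine hmem (Finset.mem_biUnion.mpr ⟨b, ?_,
    Finset.mem_image_of_mem _ (mem_support_iff.mpr (Ne.symm hm))⟩)
  rw [Finsupp.mem_support_iff]
  rintro hb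
  simp [hb] at hm

/-- A linear map between free modules is graded, of degree `0`, if every matrix entry is
homogeneous of degree the difference of the degrees of the basis elements. -/
def IsGradedMap (deg : B → ℕ) (deg' : B' → ℕ)
    (d : (B →₀ MvPolynomial σ R) →ₗ[MvPolynomial σ R] (B' →₀ MvPolynomial σ R)) : Prop :=
  ∀ b c, ∀ m ∈ (d (Finsupp.single b 1) c).support, mdeg m + deg' c = deg b

theorem IsGradedMap.degreePart_comm {deg' : B' → ℕ}
    {d : (B →₀ MvPolynomial σ R) →ₗ[MvPolynomial σ R] (B' →₀ MvPolynomial σ R)}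
    (hd : IsGradedMap deg deg' d) (j : ℕ) (f : B →₀ MvPolynomial σ R) :
    degreePart deg' j (d f) = d (degreePart deg j f) := by
  induction f using Finsupp.induction_linear with
  | zero => simp only [map_zero]
  | add f g hf hg => simp only [map_add, hf, hg]
  | single b p =>
    rw [degreePart_single, ← Finsupp.smul_single_one,
      ← Finsupp.smul_single_one b (shiftedComponent _ _ _),
      map_smul d, map_smul d]
    ext1 c
    rw [degreePart_apply, Finsupp.smul_apply, Finsupp.smul_apply, smul_eq_mul, smul_eq_mul,
      shiftedComponent_mul j p (hd b c)]

end Grading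

section MinimalGenerators

variable {σ K B B' : Type*} [Field K] {deg : B → ℕ} {deg' : B' → ℕ}
  {N : Submodule (MvPolynomial σ K) (B →₀ MvPolynomial σ K)} {g : B' → B →₀ MvPolynomial σ K}

theorem isGradedMap_linearCombination (hg : ∀ c, degreePart deg (deg' c) (g c) = g c) :
    IsGradedMap deg' deg (Finsupp.linearCombination (MvPolynomial σ K) g) := by
  intro c b m hm
  rw [Finsupp.linearCombination_single, one_smul, mem_support_iff, ← hg c, degreePart_apply,
    coeff_shiftedComponent] at hm
  exact (ite_ne_right_iff.mp hm).1

theorem mem_span_image_compl_of_linearCombination_eq_zero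
    (hg : ∀ c, degreePart deg (deg' c) (g c) = g c) {f : B' →₀ MvPolynomial σ K}
    (hf : Finsupp.linearCombination (MvPolynomial σ K) g f = 0) {c₀ : B'}
    (hc₀ : coeff 0 (f c₀) ≠ 0) : g c₀ ∈ Submodule.span (MvPolynomial σ K) (g '' {c₀}ᶜ) := by
  classical
  set f' := degreePart deg' (deg' c₀) f with hf'
  have hunit : IsUnit (f' c₀) := by
    rw [hf', degreePart_apply, shiftedComponent, if_pos le_rfl, Nat.sub_self,
      homogeneousComponent_zero]
    exact (isUnit_iff_ne_zero.mpr hc₀).map C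
  have hrel : f' c₀ • g c₀ + Finsupp.linearCombination (MvPolynomial σ K) g (f'.erase c₀) = 0 := by
    rw [← Finsupp.linearCombination_single, ← map_add, Finsupp.single_add_erase,
      ← (isGradedMap_linearCombination hg).degreePart_comm, hf, map_zero]
  rw [← Submodule.smul_mem_iff_of_isUnit _ hunit, eq_neg_of_add_eq_zero_left hrel]
  refine Submodule.neg_mem _ ((Finsupp.mem_span_image_iff_linearCombination _).mpr
    ⟨_, (Finsupp.mem_supported _ _).mpr fun c hc ↦ ?_, rfl⟩)
  rw [Finsupp.support_erase] at hc
  exact Finset.ne_of_mem_erase hc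

/-- The submodule `N` of a graded free module is generated by `k` homogeneous elements. -/
def HasHomogeneousGenerators (deg : B → ℕ)
    (N : Submodule (MvPolynomial σ K) (B →₀ MvPolynomial σ K)) (k : ℕ) : Prop :=
  ∃ (g : Fin k → B →₀ MvPolynomial σ K) (deg' : Fin k → ℕ),
    (∀ c, degreePart deg (deg' c) (g c) = g c) ∧
      Submodule.span (MvPolynomial σ K) (Set.range g) = N

theorem span_homogeneous_eq (hN : ∀ j, ∀ f ∈ N, degreePart deg j f ∈ N) :
    Submodule.span (MvPolynomial σ K) {f | f ∈ N ∧ ∃ j, degreePart deg j f = f} = N := by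
  refine le_antisymm (Submodule.span_le.mpr fun f hf ↦ hf.1) fun f hf ↦ ?_
  obtain ⟨s, hs⟩ := exists_sum_degreePart_eq deg f
  rw [← hs]
  exact Submodule.sum_mem _ fun j _ ↦
    Submodule.subset_span ⟨hN j f hf, j, degreePart_degreePart j f⟩

theorem exists_hasHomogeneousGenerators [Finite σ] [Finite B]
    (hN : ∀ j, ∀ f ∈ N, degreePart deg j f ∈ N) : ∃ k, HasHomogeneousGenerators deg N k := by
  have hfg : (Submodule.span (MvPolynomial σ K) {f | f ∈ N ∧ ∃ j, degreePart deg j f = f}).FG :=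
    IsNoetherian.noetherian _
  obtain ⟨s, hs, hspan⟩ := Submodule.fg_span_iff_fg_span_finset_subset _ |>.mp hfg
  choose deg' hdeg' using fun c ↦ (hs (s.equivFin.symm c).2).2
  refine ⟨s.card, fun c ↦ s.equivFin.symm c, deg', hdeg', ?_⟩
  rw [← span_homogeneous_eq hN, hspan]
  exact congrArg _ ((s.equivFin.symm.surjective.range_comp Subtype.val).trans Subtype.range_coe)

/-- In a generating family of minimal cardinality, no generator can be eliminated. -/
theorem exists_isGradedMap_range_eq [Finite σ] [Finite B]
    (hN : ∀ j, ∀ f ∈ N, degreePart deg j f ∈ N) :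
    ∃ (k : ℕ) (deg' : Fin k → ℕ)
      (d : (Fin k →₀ MvPolynomial σ K) →ₗ[MvPolynomial σ K] (B →₀ MvPolynomial σ K)),
      LinearMap.range d = N ∧ IsGradedMap deg' deg d ∧ ∀ f ∈ LinearMap.ker d, ∀ c,
        coeff 0 (f c) = 0 := by
  classical
  have hex := exists_hasHomogeneousGenerators hN
  obtain ⟨g, deg', hg, hspan⟩ := Nat.find_spec hex
  have hmin := fun m ↦ Nat.find_min hex (m := m)
  generalize Nat.find hex = k at g deg' hg hspan hmin
  refine ⟨k, deg', Finsupp.linearCombination _ g,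
    (Finsupp.range_linearCombination _).trans hspan, isGradedMap_linearCombination hg,
    fun f hf c₀ ↦ ?_⟩
  by_contra hc₀
  obtain ⟨k, rfl⟩ := Nat.exists_eq_add_one.mpr c₀.pos
  have hmem := mem_span_image_compl_of_linearCombination_eq_zero hg (LinearMap.mem_ker.mp hf) hc₀
  rw [← Fin.range_succAbove, ← Set.range_comp] at hmem
  refine hmin k k.lt_succ_self ⟨g ∘ c₀.succAbove, deg' ∘ c₀.succAbove, fun c ↦ hg _, ?_⟩
  refine hspan ▸ le_antisymm (Submodule.span_mono (Set.range_comp_subset_range _ _))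
    (Submodule.span_le.mpr ?_)
  rintro _ ⟨c, rfl⟩
  rcases Fin.eq_self_or_eq_succAbove c₀ c with rfl | ⟨c, rfl⟩
  · exact hmem
  · exact Submodule.subset_span ⟨c, rfl⟩

end MinimalGenerators

section ExistsResolution

variable {σ K : Type*} [Field K]

/-- A stage in the construction of a minimal graded free resolution: a graded free module together
with the graded submodule, contained in the graded maximal ideal times the module, that the next
differential has to cover. -/
structure ResolutionStage (σ K : Type*) [Field K] where
  basis : Type
  finite_basis : Finite basis
  deg : basis → ℕ
  syzygies : Submodule (MvPolynomial σ K) (basis →₀ MvPolynomial σ K)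
  degreePart_mem : ∀ j, ∀ f ∈ syzygies, degreePart deg j f ∈ syzygies
  coeff_zero : ∀ f ∈ syzygies, ∀ c, coeff 0 (f c) = 0

namespace ResolutionStage

theorem exists_next [Finite σ] (s : ResolutionStage σ K) :
    ∃ (t : ResolutionStage σ K) (d : (t.basis →₀ MvPolynomial σ K) →ₗ[MvPolynomial σ K]
      (s.basis →₀ MvPolynomial σ K)), LinearMap.range d = s.syzygies ∧
        t.syzygies = LinearMap.ker d ∧ IsGradedMap t.deg s.deg d := by
  have := s.finite_basis
  obtain ⟨k, deg, d, hrange, hd, hker⟩ := exists_isGradedMap_range_eq s.degreePart_mem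
  refine ⟨⟨Fin k, inferInstance, deg, LinearMap.ker d, fun j f hf ↦ ?_, hker⟩, d, hrange, rfl, hd⟩
  rw [LinearMap.mem_ker] at hf ⊢
  rw [← hd.degreePart_comm, hf, map_zero]

/-- The stage `S ⟶ S/I`, in which the ideal `I` itself is still to be covered. -/
noncomputable def ofIdeal (I : Ideal (MvPolynomial σ K))
    (hI : I.IsHomogeneous (homogeneousSubmodule σ K)) (hI₀ : ∀ f ∈ I, coeff 0 f = 0) :
    ResolutionStage σ K where
  basis := Unit
  finite_basis := inferInstance
  deg _ := 0
  syzygies := Submodule.comap (Finsupp.lapply ()) I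
  degreePart_mem j f hf := by
    rw [Submodule.mem_comap, Finsupp.lapply_apply] at hf ⊢
    rw [degreePart_apply]
    exact shiftedComponent_mem hI hf
  coeff_zero f hf _ := hI₀ _ hf

end ResolutionStage

theorem nonempty_minGradedFreeRes [Finite σ] {I : Ideal (MvPolynomial σ K)}
    (hI : I.IsHomogeneous (homogeneousSubmodule σ K)) (hI₀ : ∀ f ∈ I, coeff 0 f = 0) :
    Nonempty (MinGradedFreeRes K σ I) := by
  choose next d hrange hker hd using fun s : ResolutionStage σ K ↦ s.exists_next
  let stage : ℕ → ResolutionStage σ K := Nat.rec (ResolutionStage.ofIdeal I hI hI₀) fun _ ↦ next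
  let ε : (Unit →₀ MvPolynomial σ K) →ₗ[MvPolynomial σ K] MvPolynomial σ K := Finsupp.lapply ()
  have hε : ∀ u f, ε (Finsupp.single u f) = f := fun _ _ ↦ Finsupp.single_eq_same
  have hε_homog : ∀ u, (ε (Finsupp.single u 1)).IsHomogeneous 0 := fun _ ↦ by
    rw [hε]
    exact isHomogeneous_one σ K
  have hε_surj : ∀ f, ∃ t, ε t - f ∈ I := fun f ↦ ⟨Finsupp.single () f, by
    rw [hε, sub_self]
    exact I.zero_mem⟩
  exact ⟨{
    B := fun i ↦ (stage i).basis
    finB := fun i ↦ (stage i).finite_basis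
    deg := fun i ↦ (stage i).deg
    d := fun i ↦ d (stage i)
    ε := ε
    ε_homog := hε_homog
    surj := hε_surj
    exact0 := hrange (stage 0)
    exact := fun i ↦ (hrange (stage (i + 1))).trans (hker (stage i))
    homog := fun i ↦ hd (stage i)
    minimal := fun i b ↦ (stage i).coeff_zero _ (hrange (stage i) ▸ ⟨_, rfl⟩) }⟩

end ExistsResolution

namespace MinGradedFreeRes

variable {σ K : Type*} [Field K] {I L : Ideal (MvPolynomial σ K)} (F : MinGradedFreeRes K σ I)
  {l : MvPolynomial σ K} {θ : List (MvPolynomial σ K)} {i s : ℕ}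

/-- The elements of `F_i` that represent cycles of `F / LF`. -/
noncomputable def cycles (L : Ideal (MvPolynomial σ K)) :
    ∀ i, Submodule (MvPolynomial σ K) (F.B i →₀ MvPolynomial σ K)
  | 0 => ⊤
  | i + 1 => Submodule.comap (F.d i) (L • ⊤)

/-- The elements of `F_i` that represent boundaries of `F / LF`. -/
noncomputable def boundaries (L : Ideal (MvPolynomial σ K)) (i : ℕ) :
    Submodule (MvPolynomial σ K) (F.B i →₀ MvPolynomial σ K) :=
  LinearMap.range (F.d i) ⊔ L • ⊤

/-- The vanishing of `H_i(F / LF)` in degree `i + s`, that is, of `Tor_i(S/I, S/L)` in row `s` of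
the Betti table. -/
def HomologyVanishes (L : Ideal (MvPolynomial σ K)) (i s : ℕ) : Prop :=
  ∀ f ∈ F.cycles L i, degreePart (F.deg i) (i + s) f = f → f ∈ F.boundaries L i

variable {F}

theorem mem_boundaries_iff {f : F.B i →₀ MvPolynomial σ K} :
    f ∈ F.boundaries L i ↔ ∃ g, f - F.d i g ∈
      L • (⊤ : Submodule (MvPolynomial σ K) (F.B i →₀ MvPolynomial σ K)) := by
  rw [boundaries, Submodule.mem_sup]
  constructor
  · rintro ⟨_, ⟨g, rfl⟩, v, hv, rfl⟩
    exact ⟨g, by rwa [add_sub_cancel_left]⟩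
  · rintro ⟨g, hg⟩
    exact ⟨_, ⟨g, rfl⟩, _, hg, add_sub_cancel _ _⟩

theorem boundaries_mono {L' : Ideal (MvPolynomial σ K)} (h : L ≤ L') :
    F.boundaries L i ≤ F.boundaries L' i :=
  sup_le_sup_left (Submodule.smul_mono_left h) _

theorem d_d (g : F.B (i + 2) →₀ MvPolynomial σ K) : F.d i (F.d (i + 1) g) = 0 :=
  LinearMap.mem_ker.mp (F.exact i ▸ LinearMap.mem_range_self _ g)

theorem boundaries_le_cycles : F.boundaries L i ≤ F.cycles L i := by
  cases i with
  | zero => exact le_top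
  | succ i =>
    refine sup_le ?_ (Submodule.smul_top_le_comap_smul_top L (F.d i))
    rintro _ ⟨g, rfl⟩
    rw [cycles, Submodule.mem_comap, d_d]
    exact Submodule.zero_mem _

theorem mem_cycles_of_smul_mem (hl : IsSMulRegular (MvPolynomial σ K ⧸ L) l)
    {w : F.B i →₀ MvPolynomial σ K} (hw : l • w ∈ F.cycles L i) : w ∈ F.cycles L i := by
  cases i with
  | zero => trivial
  | succ i =>
    rw [cycles, Submodule.mem_comap, map_smul] at hw
    exact mem_smul_top_finsupp_of_smul_mem hl hw

theorem degreePart_d (j : ℕ) (f : F.B (i + 1) →₀ MvPolynomial σ K) :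
    degreePart (F.deg i) j (F.d i f) = F.d i (degreePart (F.deg (i + 1)) j f) :=
  IsGradedMap.degreePart_comm (F.homog i) j f

theorem exists_degreePart_eq_of_mem_boundaries
    (hL : L.IsHomogeneous (homogeneousSubmodule σ K)) {j : ℕ} {f : F.B i →₀ MvPolynomial σ K}
    (hf : f ∈ F.boundaries L i) (hfj : degreePart (F.deg i) j f = f) :
    ∃ g, degreePart (F.deg (i + 1)) j g = g ∧ f - F.d i g ∈
      L • (⊤ : Submodule (MvPolynomial σ K) (F.B i →₀ MvPolynomial σ K)) := by
  obtain ⟨g, hg⟩ := mem_boundaries_iff.mp hf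
  refine ⟨degreePart (F.deg (i + 1)) j g, degreePart_degreePart j g, ?_⟩
  have := degreePart_mem_smul_top (deg := F.deg i) (j := j) hL hg
  rwa [map_sub, hfj, degreePart_d] at this

theorem mem_boundaries_zero_iff {w : F.B 0 →₀ MvPolynomial σ K} :
    w ∈ F.boundaries L 0 ↔ F.ε w ∈ I ⊔ L := by
  have hε : L • (⊤ : Submodule _ (F.B 0 →₀ MvPolynomial σ K)) ≤ Submodule.comap F.ε L := by
    simpa only [smul_eq_mul, Ideal.mul_top] using Submodule.smul_top_le_comap_smul_top L F.ε
  rw [boundaries, F.exact0]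
  constructor
  · intro h
    obtain ⟨u, hu, v, hv, rfl⟩ := Submodule.mem_sup.mp h
    rw [map_add]
    exact Submodule.add_mem_sup hu (hε hv)
  · intro h
    obtain ⟨a, ha, b, hb, hab⟩ := Submodule.mem_sup.mp h
    obtain ⟨t, ht⟩ := F.surj 1
    rw [← sub_add_cancel w (b • t)]
    refine Submodule.add_mem_sup ?_ (Submodule.smul_mem_smul hb Submodule.mem_top)
    rw [Submodule.mem_comap, map_sub, map_smul, ← hab, smul_eq_mul]
    convert I.sub_mem ha (I.mul_mem_left b ht) using 1
    ring

theorem homogeneousComponent_ε (j : ℕ) (f : F.B 0 →₀ MvPolynomial σ K) :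
    homogeneousComponent j (F.ε f) = F.ε (degreePart (F.deg 0) j f) := by
  induction f using Finsupp.induction_linear with
  | zero => simp only [map_zero]
  | add f g hf hg => simp only [map_add, hf, hg]
  | single b p =>
    rw [degreePart_single, ← Finsupp.smul_single_one,
      ← Finsupp.smul_single_one b (shiftedComponent _ _ _),
      map_smul F.ε, map_smul F.ε, smul_eq_mul, smul_eq_mul, ← shiftedComponent_zero_left,
      shiftedComponent_mul j p (mdeg_eq_of_mem_support (F.ε_homog b))]

namespace HomologyVanishes

theorem mem_boundaries_of_smul_mem (h : F.HomologyVanishes L i s)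
    (hl : IsSMulRegular (MvPolynomial σ K ⧸ L) l) {w : F.B i →₀ MvPolynomial σ K}
    (hw : degreePart (F.deg i) (i + s) w = w) (hlw : l • w ∈ F.boundaries L i) :
    w ∈ F.boundaries L i :=
  h w (mem_cycles_of_smul_mem hl (boundaries_le_cycles hlw)) hw

theorem sup_span_singleton_succ (hL : L.IsHomogeneous (homogeneousSubmodule σ K))
    (hl : l.IsHomogeneous 1) (h : F.HomologyVanishes L (i + 1) s)
    (hinj : ∀ w, degreePart (F.deg i) (i + s) w = w → l • w ∈ F.boundaries L i →
      w ∈ F.boundaries L i) :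
    F.HomologyVanishes (L ⊔ Ideal.span {l}) (i + 1) s := by
  intro f hf hdeg
  rw [add_right_comm] at hdeg
  obtain ⟨u, hu, w, huw⟩ := exists_add_smul_eq_of_mem_sup_smul_top hf
  set u' := degreePart (F.deg i) (i + s + 1) u
  set w' := degreePart (F.deg i) (i + s) w
  have hw' : degreePart (F.deg i) (i + s) w' = w' := degreePart_degreePart _ _
  have hu' : u' ∈ L • ⊤ := degreePart_mem_smul_top hL hu
  have hdf : F.d i f = u' + l • w' := by
    rw [← degreePart_linear_smul _ hl, ← map_add, huw, degreePart_d, hdeg]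
  have hlw' : l • w' ∈ F.boundaries L i := by
    rw [eq_sub_of_add_eq' hdf.symm]
    exact Submodule.sub_mem _ (Submodule.mem_sup_left ⟨f, rfl⟩) (Submodule.mem_sup_right hu')
  obtain ⟨g, hg, hwg⟩ := exists_degreePart_eq_of_mem_boundaries hL (hinj w' hw' hlw') hw'
  have hcycle : f - l • g ∈ F.cycles L (i + 1) := by
    rw [cycles, Submodule.mem_comap, map_sub, map_smul, hdf, add_sub_assoc, ← smul_sub]
    exact Submodule.add_mem _ hu' (Submodule.smul_mem _ l hwg)
  have hbdy : f - l • g ∈ F.boundaries L (i + 1) := h _ hcycle (by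
    rw [add_right_comm, map_sub, degreePart_linear_smul _ hl, hdeg, hg])
  rw [← sub_add_cancel f (l • g)]
  exact Submodule.add_mem _ (boundaries_mono le_sup_left hbdy) (Submodule.mem_sup_right
    (Submodule.smul_mem_smul (Ideal.mem_sup_right (Ideal.mem_span_singleton_self l)) trivial))

theorem sup_span_singleton_zero {l : MvPolynomial σ K} (h : F.HomologyVanishes L 0 s) :
    F.HomologyVanishes (L ⊔ Ideal.span {l}) 0 s :=
  fun f _ hf ↦ boundaries_mono le_sup_left (h f trivial hf)

theorem of_sup_span_singleton (hL : L.IsHomogeneous (homogeneousSubmodule σ K))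
    (hl : l.IsHomogeneous 1) (hreg : IsSMulRegular (MvPolynomial σ K ⧸ L) l)
    (h : F.HomologyVanishes L i (s + 1))
    (hsup : F.HomologyVanishes (L ⊔ Ideal.span {l}) (i + 1) s) : F.HomologyVanishes L i s := by
  intro f hf hdeg
  have hlf : degreePart (F.deg i) (i + (s + 1)) (l • f) = l • f := by
    rw [← add_assoc, degreePart_linear_smul _ hl, hdeg]
  obtain ⟨g, hg, hfg⟩ := exists_degreePart_eq_of_mem_boundaries hL
    (h _ (Submodule.smul_mem _ l hf) hlf) hlf
  have hcycle : g ∈ F.cycles (L ⊔ Ideal.span {l}) (i + 1) := by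
    rw [cycles, Submodule.mem_comap, ← sub_sub_cancel (l • f) (F.d i g)]
    exact Submodule.sub_mem _
      (Submodule.smul_mem_smul (Ideal.mem_sup_right (Ideal.mem_span_singleton_self l)) trivial)
      (Submodule.smul_mono_left le_sup_left hfg)
  obtain ⟨g', hg'⟩ := mem_boundaries_iff.mp (hsup g hcycle (by rwa [add_right_comm]))
  obtain ⟨u, hu, w, huw⟩ := exists_add_smul_eq_of_mem_sup_smul_top hg'
  have hdg : F.d i g = F.d i u + l • F.d i w := by
    rw [← map_smul, ← map_add, huw, map_sub, d_d, sub_zero]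
  refine mem_boundaries_iff.mpr ⟨w, mem_smul_top_finsupp_of_smul_mem hreg ?_⟩
  rw [smul_sub, ← sub_add_cancel (l • f) (F.d i g), hdg, add_sub_assoc, add_sub_cancel_right]
  exact Submodule.add_mem _ (hdg ▸ hfg) (Submodule.smul_top_le_comap_smul_top L (F.d i) hu)

end HomologyVanishes

theorem homologyVanishes_bot : F.HomologyVanishes ⊥ (i + 1) s := by
  intro f hf _
  rw [cycles, Submodule.bot_smul, Submodule.mem_comap, Submodule.mem_bot] at hf
  rw [boundaries, F.exact]
  exact Submodule.mem_sup_left hf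

/-- Killing `l` preserves acyclicity: for `H_1` because `l` is regular on `S/(I + L)`, and for
higher homology because `l`, when it is not in the prime ideal `L`, is regular on `S/L`. -/
theorem homologyVanishes_sup_span_singleton (hL : IsLinearIdeal L) (hl : l.IsHomogeneous 1)
    (hreg : IsSMulRegular (MvPolynomial σ K ⧸ (I ⊔ L)) l)
    (h : ∀ i s, F.HomologyVanishes L (i + 1) s) (i s : ℕ) :
    F.HomologyVanishes (L ⊔ Ideal.span {l}) (i + 1) s := by
  by_cases hlL : l ∈ L
  · rw [sup_span_singleton_eq_left hlL]
    exact h i s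
  refine (h i s).sup_span_singleton_succ hL.isHomogeneous hl fun w hw hlw ↦ ?_
  cases i with
  | zero =>
    rw [mem_boundaries_zero_iff] at hlw ⊢
    rw [map_smul] at hlw
    exact mem_of_isSMulRegular_quotient_of_smul_mem hreg hlw
  | succ i => exact (h i s).mem_boundaries_of_smul_mem (hL.isSMulRegular_quotient hlL) hw hlw

theorem homologyVanishes_sup_ofList (hL : IsLinearIdeal L) (hθ : ∀ l ∈ θ, l.IsHomogeneous 1)
    (hreg : RingTheory.Sequence.IsWeaklyRegular (MvPolynomial σ K ⧸ (I ⊔ L)) θ)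
    (h : ∀ i s, F.HomologyVanishes L (i + 1) s) (i s : ℕ) :
    F.HomologyVanishes (L ⊔ Ideal.ofList θ) (i + 1) s := by
  induction θ generalizing L with
  | nil => simpa only [Ideal.ofList_nil, sup_bot_eq] using h i s
  | cons l θ ih =>
    rw [List.forall_mem_cons] at hθ
    rw [isWeaklyRegular_quotient_cons_iff, sup_assoc] at hreg
    rw [sup_ofList_cons]
    exact ih (hL.sup_span_singleton hθ.1) hθ.2 hreg.2
      (homologyVanishes_sup_span_singleton hL hθ.1 hreg.1 h)

variable (F) in
/-- The regularity of `Tor(S/I, S/L) = H(F / LF)` is `r`: this is the last nonzero row. -/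
def HomologyRegularityEq (L : Ideal (MvPolynomial σ K)) (r : ℕ) : Prop :=
  (∀ i s, r < s → F.HomologyVanishes L i s) ∧ ∃ i, ¬F.HomologyVanishes L i r

namespace HomologyRegularityEq

variable {r : ℕ}

theorem sup_span_singleton (h : F.HomologyRegularityEq L r) (hL : IsLinearIdeal L)
    (hl : l.IsHomogeneous 1) : F.HomologyRegularityEq (L ⊔ Ideal.span {l}) r := by
  by_cases hlL : l ∈ L
  · rwa [sup_span_singleton_eq_left hlL]
  have hreg := hL.isSMulRegular_quotient hlL
  obtain ⟨hvan, i, hi⟩ := h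
  refine ⟨fun i s hs ↦ ?_, i + 1, fun hsup ↦ hi ?_⟩
  · cases i with
    | zero => exact (hvan 0 s hs).sup_span_singleton_zero
    | succ i =>
      exact (hvan (i + 1) s hs).sup_span_singleton_succ hL.isHomogeneous hl
        fun w ↦ (hvan i s hs).mem_boundaries_of_smul_mem hreg
  · exact (hvan i (r + 1) r.lt_succ_self).of_sup_span_singleton hL.isHomogeneous hl hreg hsup

theorem sup_ofList (h : F.HomologyRegularityEq L r) (hL : IsLinearIdeal L)
    (hθ : ∀ l ∈ θ, l.IsHomogeneous 1) : F.HomologyRegularityEq (L ⊔ Ideal.ofList θ) r := by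
  induction θ generalizing L with
  | nil => rwa [Ideal.ofList_nil, sup_bot_eq]
  | cons l θ ih =>
    rw [List.forall_mem_cons] at hθ
    rw [sup_ofList_cons]
    exact ih (h.sup_span_singleton hL hθ.1) (hL.sup_span_singleton hθ.1) hθ.2

theorem of_homologyVanishes_zero (h : ∀ i s, F.HomologyVanishes L (i + 1) s)
    (hpow : idealOfVars σ K ^ (r + 1) ≤ I ⊔ L) (hr : ¬F.HomologyVanishes L 0 r) :
    F.HomologyRegularityEq L r := by
  refine ⟨fun i s hs ↦ ?_, 0, hr⟩
  cases i with
  | zero =>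
    intro f _ hf
    rw [zero_add] at hf
    rw [mem_boundaries_zero_iff, ← hf, ← homogeneousComponent_ε]
    refine hpow ((mem_pow_idealOfVars_iff' _ _).mpr fun m hm ↦ ?_)
    rw [coeff_homogeneousComponent, if_neg (by omega)]
  | succ i => exact h i s

end HomologyRegularityEq

theorem not_homologyVanishes_zero {r : ℕ} (hI : I.IsHomogeneous (homogeneousSubmodule σ K))
    (hpow : ¬idealOfVars σ K ^ r ≤ I ⊔ L) : ¬F.HomologyVanishes L 0 r := by
  refine fun h ↦ hpow ?_
  rw [pow_idealOfVars_eq_span, Ideal.span_le]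
  rintro _ ⟨m, hm, rfl⟩
  obtain ⟨t, ht⟩ := F.surj (monomial m 1)
  have hεt : F.ε (degreePart (F.deg 0) r t) ∈ I ⊔ L := by
    rw [← mem_boundaries_zero_iff]
    exact h _ trivial (by rw [zero_add, degreePart_degreePart])
  have hcomp := homogeneousComponent_mem_of_mem hI ht r
  rw [map_sub, homogeneousComponent_ε,
    homogeneousComponent_eq_self (isHomogeneous_monomial 1 hm)] at hcomp
  simpa using Submodule.sub_mem _ hεt (Ideal.mem_sup_left hcomp)

theorem d_mem_idealOfVars_smul_top (f : F.B (i + 1) →₀ MvPolynomial σ K) :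
    F.d i f ∈ idealOfVars σ K •
      (⊤ : Submodule (MvPolynomial σ K) (F.B i →₀ MvPolynomial σ K)) := by
  induction f using Finsupp.induction_linear with
  | zero => rw [map_zero]; exact Submodule.zero_mem _
  | add f g hf hg => rw [map_add]; exact Submodule.add_mem _ hf hg
  | single b p =>
    rw [← Finsupp.smul_single_one, map_smul]
    exact Submodule.smul_mem _ p (mem_smul_top_finsupp_iff.mpr fun c ↦
      mem_idealOfVars_iff.mpr (F.minimal i b c))

/-- Modulo the graded maximal ideal, the differential of a minimal resolution is zero. -/
theorem homologyVanishes_idealOfVars_iff :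
    F.HomologyVanishes (idealOfVars σ K) i s ↔ ∀ b, F.deg i b ≠ i + s := by
  have hcycles : F.cycles (idealOfVars σ K) i = ⊤ := by
    cases i with
    | zero => rfl
    | succ i => exact eq_top_iff.mpr fun f _ ↦ d_mem_idealOfVars_smul_top f
  have hboundaries : F.boundaries (idealOfVars σ K) i = idealOfVars σ K • ⊤ := by
    refine sup_eq_right.mpr ?_
    rintro _ ⟨f, rfl⟩
    exact d_mem_idealOfVars_smul_top f
  simp only [HomologyVanishes, hcycles, hboundaries, mem_smul_top_finsupp_iff,
    mem_idealOfVars_iff]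
  constructor
  · intro h b hb
    have hdeg : degreePart (F.deg i) (i + s) (Finsupp.single b (1 : MvPolynomial σ K)) =
        Finsupp.single b 1 := by
      rw [degreePart_single, shiftedComponent, if_pos hb.le, hb, Nat.sub_self,
        homogeneousComponent_eq_self (isHomogeneous_one σ K)]
    simpa using h _ trivial hdeg b
  · intro h f _ hf b
    rw [← hf, degreePart_apply, coeff_shiftedComponent, if_neg]
    rw [mdeg_eq_degree, map_zero, zero_add]
    exact h b

end MinGradedFreeRes

section RegularityCriterion

variable {σ K : Type*} [Field K] {I : Ideal (MvPolynomial σ K)} {θ : List (MvPolynomial σ K)}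
  {r : ℕ}

theorem coeff_zero_eq_zero_of_isHomogeneous (hI : I.IsHomogeneous (homogeneousSubmodule σ K))
    (hI_top : I ≠ ⊤) : ∀ f ∈ I, coeff 0 f = 0 := by
  intro f hf
  by_contra hf₀
  have := homogeneousComponent_mem_of_mem hI hf 0
  rw [homogeneousComponent_zero] at this
  exact hI_top (Ideal.eq_top_of_isUnit_mem I this ((isUnit_iff_ne_zero.mpr hf₀).map C))

theorem sup_ofList_X_eq_idealOfVars [Fintype σ] (hθ : ∀ l ∈ θ, l.IsHomogeneous 1) :
    Ideal.ofList θ ⊔ Ideal.ofList ((Finset.univ : Finset σ).toList.map X) = idealOfVars σ K := by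
  have hvars : Ideal.ofList ((Finset.univ : Finset σ).toList.map X) = idealOfVars σ K := by
    simp [Ideal.ofList, idealOfVars, Set.range]
  rw [hvars]
  refine sup_eq_right.mpr (Ideal.span_le.mpr fun l hl ↦ mem_idealOfVars_iff.mpr ?_)
  exact (hθ l hl).coeff_eq_zero (by simp)

/-- Over the artinian reduction `S/(I + (θ))`, the regularity is the largest degree of a nonzero
form. Passing from `S/(θ)` to `K = S/𝔪` by killing one more variable at a time keeps the
regularity of `Tor(S/I, -)`, and at `K` a minimal resolution displays it as its shifts. -/
theorem regEq_of_isWeaklyRegular [Finite σ] (hI : I.IsHomogeneous (homogeneousSubmodule σ K))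
    (hθ : ∀ l ∈ θ, l.IsHomogeneous 1)
    (hreg : RingTheory.Sequence.IsWeaklyRegular (MvPolynomial σ K ⧸ I) θ)
    (hle : idealOfVars σ K ^ (r + 1) ≤ I ⊔ Ideal.ofList θ)
    (hnle : ¬idealOfVars σ K ^ r ≤ I ⊔ Ideal.ofList θ) : RegEq I r := by
  have hI_top : I ≠ ⊤ := by
    rintro rfl
    exact hnle (le_sup_of_le_left le_top)
  refine ⟨nonempty_minGradedFreeRes hI (coeff_zero_eq_zero_of_isHomogeneous hI hI_top),
    fun F ↦ ?_⟩
  have hacyclic : ∀ i s, F.HomologyVanishes (Ideal.ofList θ) (i + 1) s := by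
    simpa using MinGradedFreeRes.homologyVanishes_sup_ofList IsLinearIdeal.bot hθ
      (by rwa [sup_bot_eq]) fun i s ↦ MinGradedFreeRes.homologyVanishes_bot
  have hL : F.HomologyRegularityEq (Ideal.ofList θ) r :=
    .of_homologyVanishes_zero hacyclic hle (MinGradedFreeRes.not_homologyVanishes_zero hI hnle)
  have := Fintype.ofFinite σ
  have h𝔪 : F.HomologyRegularityEq (idealOfVars σ K) r := by
    rw [← sup_ofList_X_eq_idealOfVars hθ]
    refine hL.sup_ofList (.ofList hθ) fun l hl ↦ ?_
    obtain ⟨v, -, rfl⟩ := List.mem_map.mp hl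
    exact isHomogeneous_X K v
  simp only [MinGradedFreeRes.HomologyRegularityEq,
    MinGradedFreeRes.homologyVanishes_idealOfVars_iff, not_forall, not_not] at h𝔪
  refine ⟨fun i b ↦ ?_, h𝔪.2⟩
  by_contra hb
  exact h𝔪.1 i (F.deg i b - i) (by omega) b (by omega)

end RegularityCriterion

section Diamond

variable {K : Type*} [Field K] {n : ℕ}

theorem isHomogeneous_xP : (xP K n).IsHomogeneous 1 := isHomogeneous_X _ _

theorem isHomogeneous_yP (i : Fin n) : (yP K n i).IsHomogeneous 1 := isHomogeneous_X _ _

theorem isHomogeneous_zP : (zP K n).IsHomogeneous 1 := isHomogeneous_X _ _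

theorem idealOfVars_le_of_mem {I : Ideal (MvPolynomial (Fin (n + 2)) K)} (hx : xP K n ∈ I)
    (hy : ∀ i, yP K n i ∈ I) (hz : zP K n ∈ I) : idealOfVars (Fin (n + 2)) K ≤ I := by
  refine Ideal.span_le.mpr (Set.range_subset_iff.mpr fun v ↦ ?_)
  refine Fin.cases hx (fun w ↦ Fin.lastCases ?_ (fun i ↦ ?_) w) v
  · rw [Fin.succ_last]
    exact hz
  · rw [Fin.succ_castSucc]
    exact hy i

theorem mul_mem_of_mem_idealOfVars {I : Ideal (MvPolynomial (Fin (n + 2)) K)}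
    {f g : MvPolynomial (Fin (n + 2)) K} (hf : f ∈ idealOfVars (Fin (n + 2)) K)
    (hx : xP K n * g ∈ I) (hy : ∀ i, yP K n i * g ∈ I) (hz : zP K n * g ∈ I) : f * g ∈ I := by
  simp only [← smul_eq_mul, ← Submodule.mem_colon_singleton] at hx hy hz ⊢
  exact idealOfVars_le_of_mem hx hy hz hf

theorem xP_mem_idealOfVars : xP K n ∈ idealOfVars (Fin (n + 2)) K :=
  Ideal.subset_span ⟨_, rfl⟩

theorem yP_mem_idealOfVars (i : Fin n) : yP K n i ∈ idealOfVars (Fin (n + 2)) K :=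
  Ideal.subset_span ⟨_, rfl⟩

theorem zP_mem_idealOfVars : zP K n ∈ idealOfVars (Fin (n + 2)) K :=
  Ideal.subset_span ⟨_, rfl⟩

section PointEval

variable {R : Type*} [CommRing R] [Algebra K R] (a : R) (b : Fin n → R) (c : R)

/-- Evaluation at the point with coordinates `x = a`, `y_i = b i`, `z = c`, possibly in an
extension `R` of the field of coefficients. -/
noncomputable def pointEval : MvPolynomial (Fin (n + 2)) K →ₐ[K] R :=
  aeval (Fin.cons (α := fun _ ↦ R) a (Fin.snoc (α := fun _ ↦ R) b c))

@[simp]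
theorem pointEval_xP : pointEval a b c (xP K n) = a := by
  simp [pointEval, xP]

@[simp]
theorem pointEval_yP (i : Fin n) : pointEval a b c (yP K n i) = b i := by
  simp only [pointEval, yP, aeval_X]
  rw [← Fin.succ_castSucc, Fin.cons_succ, Fin.snoc_castSucc]

@[simp]
theorem pointEval_zP : pointEval a b c (zP K n) = c := by
  simp only [pointEval, zP, aeval_X]
  rw [← Fin.succ_last, Fin.cons_succ, Fin.snoc_last]

end PointEval

/-- The ideal `(y_j - ε y_p : j ≠ p)` of a three-dimensional linear space with coordinates `x`,
`y_p` and `z`. -/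
noncomputable def spaceIdeal (p : Fin n) (ε : K) : Ideal (MvPolynomial (Fin (n + 2)) K) :=
  Ideal.span {f | ∃ j, j ≠ p ∧ f = yP K n j - C ε * yP K n p}

/-- The quadric `y_p² - ε x z`, a cone for `ε = 1` and a double plane for `ε = 0`. -/
noncomputable def quadric (p : Fin n) (ε : K) : MvPolynomial (Fin (n + 2)) K :=
  yP K n p ^ 2 - C ε * (xP K n * zP K n)

/-- The ideal of the quadric `y_p² = ε x z` in the linear space of `spaceIdeal p ε`. It turns out
to be `I : xz` for the join-meet ideal `I` (with `ε = 1`) and for its initial ideal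
(with `ε = 0`). -/
noncomputable def quadricIdeal (p : Fin n) (ε : K) : Ideal (MvPolynomial (Fin (n + 2)) K) :=
  spaceIdeal p ε ⊔ Ideal.span {quadric p ε}

/-- The coordinate of `y_i` at the points `y_p = 1` of the linear space of `spaceIdeal p ε`. -/
def spaceWeight (p : Fin n) (ε : K) (i : Fin n) : K := if i = p then 1 else ε

/-- The linear forms `x - z` and `y_1 + ⋯ + y_n + γ z`, a regular sequence on the quotients by the
join-meet ideal and its initial ideal for suitable `γ`. -/
noncomputable def linearParameters (n : ℕ) (γ : K) : List (MvPolynomial (Fin (n + 2)) K) :=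
  [xP K n - zP K n, ∑ i, yP K n i + C γ * zP K n]

/-- The ideal of the union, over `k ∈ A`, of the two coordinate planes `x = 0` and `z = 0` of the
space with coordinates `x`, `y_k` and `z`. -/
noncomputable def planesIdeal (K : Type*) [Field K] (A : Finset (Fin n)) :
    Ideal (MvPolynomial (Fin (n + 2)) K) :=
  Ideal.span ({xP K n * zP K n} ∪ {f | ∃ i j, i ≠ j ∧ f = yP K n i * yP K n j} ∪
    {f | ∃ j ∉ A, f = yP K n j})

section Space

variable {p : Fin n} {ε γ : K}

theorem spaceWeight_self : spaceWeight p ε p = 1 := if_pos rfl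

theorem spaceWeight_of_ne {j : Fin n} (hj : j ≠ p) : spaceWeight p ε j = ε := if_neg hj

theorem isLinearIdeal_spaceIdeal : IsLinearIdeal (spaceIdeal p ε) := by
  refine ⟨_, ?_, rfl⟩
  rintro _ ⟨j, -, rfl⟩
  exact (isHomogeneous_yP j).sub ((isHomogeneous_yP p).C_mul ε)

theorem isHomogeneous_of_mem_linearParameters :
    ∀ l ∈ linearParameters n γ, l.IsHomogeneous 1 := by
  simp only [linearParameters, List.forall_mem_cons, List.not_mem_nil, false_imp_iff,
    implies_true, and_true]
  exact ⟨isHomogeneous_xP.sub isHomogeneous_zP,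
    (IsHomogeneous.sum _ _ _ fun i _ ↦ isHomogeneous_yP i).add (isHomogeneous_zP.C_mul γ)⟩

theorem yP_sub_mem_spaceIdeal (j : Fin n) :
    yP K n j - C (spaceWeight p ε j) * yP K n p ∈ spaceIdeal p ε := by
  by_cases hj : j = p
  · simp [hj, spaceWeight_self]
  · exact Ideal.subset_span ⟨j, hj, by rw [spaceWeight_of_ne hj]⟩

section LinearSpacePoints

variable {R : Type*} [CommRing R] [Algebra K R] {a b c : R}

theorem spaceIdeal_le_ker :
    spaceIdeal p ε ≤ RingHom.ker (pointEval (K := K) a (fun i ↦ spaceWeight p ε i • b) c) := by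
  refine Ideal.span_le.mpr ?_
  rintro _ ⟨j, hj, rfl⟩
  simp [RingHom.mem_ker, spaceWeight_self, spaceWeight_of_ne hj, Algebra.smul_def,
    ← algebraMap_eq]

theorem ofList_linearParameters_le_ker
    (h : (∑ i, spaceWeight p ε i) • b + γ • c = 0) :
    Ideal.ofList (linearParameters n γ) ≤
      RingHom.ker (pointEval (K := K) c (fun i ↦ spaceWeight p ε i • b) c) := by
  rw [Finset.sum_smul] at h
  rw [Ideal.ofList, Ideal.span_le]
  simp [linearParameters, Set.subset_def, RingHom.mem_ker, h, ← algebraMap_eq, ← Algebra.smul_def]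

end LinearSpacePoints

theorem isWeaklyRegular_spaceIdeal (h : ∑ i, spaceWeight p ε i ≠ 0 ∨ γ ≠ 0) :
    RingTheory.Sequence.IsWeaklyRegular (MvPolynomial (Fin (n + 2)) K ⧸ spaceIdeal p ε)
      (linearParameters n γ) := by
  have hT := isLinearIdeal_spaceIdeal (p := p) (ε := ε)
  have hker (b c : K) : spaceIdeal p ε ⊔ Ideal.span {xP K n - zP K n} ≤
      RingHom.ker (pointEval (K := K) c (fun i ↦ spaceWeight p ε i • b) c) :=
    sup_le spaceIdeal_le_ker ((Ideal.span_singleton_le_iff_mem _).mpr (by simp [RingHom.mem_ker]))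
  rw [linearParameters, isWeaklyRegular_quotient_cons_iff, isWeaklyRegular_quotient_cons_iff]
  refine ⟨hT.isSMulRegular_quotient ?_, IsLinearIdeal.isSMulRegular_quotient
    (hT.sup_span_singleton (isHomogeneous_xP.sub isHomogeneous_zP)) ?_, .nil _ _⟩
  · exact notMem_of_le_ker (spaceIdeal_le_ker (a := (1 : K)) (b := 0) (c := 0)) (by simp)
  · rcases h with hsum | hγ
    · exact notMem_of_le_ker (hker 1 0) (by simpa [← algebraMap_eq] using hsum)
    · exact notMem_of_le_ker (hker 0 1) (by simpa [← algebraMap_eq] using hγ)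

/-- The point at which the regularity of `q` is tested spans the common zeros of the linear
parameters in the linear space of `spaceIdeal p ε`. -/
theorem isWeaklyRegular_spaceIdeal_sup_span_singleton {q : MvPolynomial (Fin (n + 2)) K}
    (h : ∑ i, spaceWeight p ε i ≠ 0 ∨ γ ≠ 0)
    (hq : pointEval (-∑ i, spaceWeight p ε i) (fun i ↦ spaceWeight p ε i • γ)
      (-∑ i, spaceWeight p ε i) q ≠ 0) :
    RingTheory.Sequence.IsWeaklyRegular
      (MvPolynomial (Fin (n + 2)) K ⧸ (spaceIdeal p ε ⊔ Ideal.span {q}))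
      (linearParameters n γ) := by
  refine isLinearIdeal_spaceIdeal.isWeaklyRegular_quotient_sup_span_singleton
    isHomogeneous_of_mem_linearParameters (isWeaklyRegular_spaceIdeal h) ?_
  refine notMem_of_le_ker (sup_le spaceIdeal_le_ker (ofList_linearParameters_le_ker ?_)) hq
  simp only [smul_eq_mul]
  ring

theorem isSMulRegular_spaceIdeal_sup_span_singleton {q l : MvPolynomial (Fin (n + 2)) K}
    {a b c : K} (hl1 : l.IsHomogeneous 1) (hl : l ∉ spaceIdeal p ε)
    (hla : pointEval a (fun i ↦ spaceWeight p ε i • b) c l = 0)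
    (hqa : pointEval a (fun i ↦ spaceWeight p ε i • b) c q ≠ 0) :
    IsSMulRegular (MvPolynomial (Fin (n + 2)) K ⧸ (spaceIdeal p ε ⊔ Ideal.span {q})) l := by
  refine isSMulRegular_quotient_sup_swap (isLinearIdeal_spaceIdeal.isSMulRegular_quotient hl)
    ((isLinearIdeal_spaceIdeal.sup_span_singleton hl1).isSMulRegular_quotient ?_)
  exact notMem_of_le_ker
    (sup_le spaceIdeal_le_ker ((Ideal.span_singleton_le_iff_mem _).mpr hla)) hqa

end Space

section Planes

variable {I : Ideal (MvPolynomial (Fin (n + 2)) K)} {A : Finset (Fin n)} {i j k : Fin n} {γ : K}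

theorem xP_mul_zP_mem_planesIdeal : xP K n * zP K n ∈ planesIdeal K A :=
  Ideal.subset_span (.inl (.inl rfl))

theorem yP_mul_yP_mem_planesIdeal (h : i ≠ j) : yP K n i * yP K n j ∈ planesIdeal K A :=
  Ideal.subset_span (.inl (.inr ⟨i, j, h, rfl⟩))

theorem yP_mem_planesIdeal (h : j ∉ A) : yP K n j ∈ planesIdeal K A :=
  Ideal.subset_span (.inr ⟨j, h, rfl⟩)

theorem planesIdeal_le (hxz : xP K n * zP K n ∈ I)
    (hyy : ∀ i j, i ≠ j → yP K n i * yP K n j ∈ I) (hy : ∀ j ∉ A, yP K n j ∈ I) :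
    planesIdeal K A ≤ I := by
  refine Ideal.span_le.mpr ?_
  rintro _ ((rfl | ⟨i, j, hij, rfl⟩) | ⟨j, hj, rfl⟩)
  exacts [hxz, hyy i j hij, hy j hj]

theorem yP_mem_spaceIdeal_zero (h : j ≠ k) : yP K n j ∈ spaceIdeal k (0 : K) :=
  Ideal.subset_span ⟨j, h, by simp⟩

theorem planesIdeal_singleton :
    planesIdeal K {k} = spaceIdeal k 0 ⊔ Ideal.span {xP K n * zP K n} := by
  apply le_antisymm
  · have hxz : xP K n * zP K n ∈ spaceIdeal k 0 ⊔ Ideal.span {xP K n * zP K n} :=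
      Ideal.mem_sup_right (Ideal.mem_span_singleton_self _)
    refine planesIdeal_le hxz (fun i j hij ↦ Ideal.mem_sup_left ?_) fun j hj ↦
      Ideal.mem_sup_left (yP_mem_spaceIdeal_zero (Finset.notMem_singleton.mp hj))
    by_cases hi : i = k
    · exact Ideal.mul_mem_left _ _ (yP_mem_spaceIdeal_zero (hi ▸ hij.symm))
    · exact Ideal.mul_mem_right _ _ (yP_mem_spaceIdeal_zero hi)
  · refine sup_le (Ideal.span_le.mpr ?_)
      ((Ideal.span_singleton_le_iff_mem _).mpr xP_mul_zP_mem_planesIdeal)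
    rintro _ ⟨j, hj, rfl⟩
    simpa using yP_mem_planesIdeal (Finset.notMem_singleton.mpr hj)

theorem planesIdeal_cons_sup_span_singleton (hk : k ∉ A) :
    planesIdeal K (A.cons k hk) ⊔ Ideal.span {yP K n k} = planesIdeal K A := by
  apply le_antisymm
  · refine sup_le (planesIdeal_le xP_mul_zP_mem_planesIdeal (fun i j ↦ yP_mul_yP_mem_planesIdeal)
      fun j hj ↦ yP_mem_planesIdeal fun hjA ↦ hj (Finset.mem_cons_of_mem hjA))
      ((Ideal.span_singleton_le_iff_mem _).mpr (yP_mem_planesIdeal hk))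
  · refine planesIdeal_le (Ideal.mem_sup_left xP_mul_zP_mem_planesIdeal)
      (fun i j hij ↦ Ideal.mem_sup_left (yP_mul_yP_mem_planesIdeal hij)) fun j hj ↦ ?_
    rcases eq_or_ne j k with rfl | hjk
    · exact Ideal.mem_sup_right (Ideal.mem_span_singleton_self _)
    · exact Ideal.mem_sup_left (yP_mem_planesIdeal (by simp [hjk, hj]))

theorem planesIdeal_colon (hk : k ∈ A) :
    (planesIdeal K A).colon {yP K n k} = planesIdeal K {k} := by
  refine colon_singleton_eq (planesIdeal_le xP_mul_zP_mem_planesIdeal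
    (fun i j ↦ yP_mul_yP_mem_planesIdeal) fun j hj ↦ yP_mem_planesIdeal fun hjk ↦
      hj (Finset.mem_singleton.mp hjk ▸ hk)) (fun f hf ↦ ?_) ?_
  · suffices h : planesIdeal K {k} ≤ (planesIdeal K A).colon {yP K n k} from
      Submodule.mem_colon_singleton.mp (h hf)
    refine planesIdeal_le ?_ (fun i j hij ↦ ?_) fun j hj ↦ ?_ <;>
      rw [Submodule.mem_colon_singleton, smul_eq_mul]
    · exact Ideal.mul_mem_right _ _ xP_mul_zP_mem_planesIdeal
    · exact Ideal.mul_mem_right _ _ (yP_mul_yP_mem_planesIdeal hij)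
    · exact yP_mul_yP_mem_planesIdeal (Finset.notMem_singleton.mp hj)
  · rw [planesIdeal_singleton]
    refine isSMulRegular_spaceIdeal_sup_span_singleton (a := 1) (b := 0) (c := 1)
      (isHomogeneous_yP k) ?_ (by simp) (by simp)
    exact notMem_of_le_ker (spaceIdeal_le_ker (a := 0) (b := (1 : K)) (c := 0))
      (by simp [spaceWeight_self])

theorem isWeaklyRegular_planesIdeal (hA : A.Nonempty) :
    RingTheory.Sequence.IsWeaklyRegular (MvPolynomial (Fin (n + 2)) K ⧸ planesIdeal K A)
      (linearParameters n γ) := by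
  have hsum (k : Fin n) : ∑ i, spaceWeight k (0 : K) i = 1 := by simp [spaceWeight]
  have hsingleton (k : Fin n) : RingTheory.Sequence.IsWeaklyRegular
      (MvPolynomial (Fin (n + 2)) K ⧸ planesIdeal K {k}) (linearParameters n γ) := by
    rw [planesIdeal_singleton]
    exact isWeaklyRegular_spaceIdeal_sup_span_singleton (.inl (by simp [hsum])) (by simp [hsum])
  induction hA using Finset.Nonempty.cons_induction with
  | singleton k => exact hsingleton k
  | cons k A hk _ ih =>
    refine isWeaklyRegular_quotient_of_sup_of_colon (q := yP K n k) ?_ ?_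
    · rwa [planesIdeal_cons_sup_span_singleton]
    · rw [planesIdeal_colon (Finset.mem_cons_self k A)]
      exact hsingleton k

end Planes

section Quadric

variable {p : Fin n} {ε γ : K} {I : Ideal (MvPolynomial (Fin (n + 2)) K)}

theorem isWeaklyRegular_quadricIdeal (h : γ ^ 2 ≠ ε * (∑ i, spaceWeight p ε i) ^ 2) :
    RingTheory.Sequence.IsWeaklyRegular (MvPolynomial (Fin (n + 2)) K ⧸ quadricIdeal p ε)
      (linearParameters n γ) := by
  refine isWeaklyRegular_spaceIdeal_sup_span_singleton ?_ ?_
  · by_contra! h0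
    simp [h0.1, h0.2] at h
  · simpa [quadric, spaceWeight_self, ← algebraMap_eq, sub_eq_zero, ← sq] using h

theorem isSMulRegular_quadricIdeal :
    IsSMulRegular (MvPolynomial (Fin (n + 2)) K ⧸ quadricIdeal p ε) (xP K n * zP K n) := by
  have hker (a c : K) := spaceIdeal_le_ker (p := p) (ε := ε) (a := a) (b := 0) (c := c)
  refine IsSMulRegular.mul
    (isSMulRegular_spaceIdeal_sup_span_singleton (a := 0) (b := 1) (c := 0) isHomogeneous_xP
      (notMem_of_le_ker (hker 1 0) (by simp)) (by simp) ?_)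
    (isSMulRegular_spaceIdeal_sup_span_singleton (a := 0) (b := 1) (c := 0) isHomogeneous_zP
      (notMem_of_le_ker (hker 0 1) (by simp)) (by simp) ?_) <;>
  simp [quadric, spaceWeight_self]

theorem colon_eq_quadricIdeal (hle : I ≤ quadricIdeal p ε)
    (hspace : ∀ j, j ≠ p → (yP K n j - C ε * yP K n p) * (xP K n * zP K n) ∈ I)
    (hquadric : quadric p ε * (xP K n * zP K n) ∈ I) :
    I.colon {xP K n * zP K n} = quadricIdeal p ε := by
  refine colon_singleton_eq hle (fun f hf ↦ ?_) isSMulRegular_quadricIdeal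
  suffices h : quadricIdeal p ε ≤ I.colon {xP K n * zP K n} from
    Submodule.mem_colon_singleton.mp (h hf)
  refine sup_le (Ideal.span_le.mpr ?_) ((Ideal.span_singleton_le_iff_mem _).mpr
    (Submodule.mem_colon_singleton.mpr hquadric))
  rintro _ ⟨j, hj, rfl⟩
  exact Submodule.mem_colon_singleton.mpr (hspace j hj)

end Quadric

section Powers

variable {p : Fin n} {ε γ : K}

theorem xP_sub_zP_mem_ofList :
    xP K n - zP K n ∈ Ideal.ofList (linearParameters n γ) :=
  Ideal.subset_span (by simp [linearParameters])

theorem sum_yP_add_mem_ofList :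
    ∑ i, yP K n i + C γ * zP K n ∈ Ideal.ofList (linearParameters n γ) :=
  Ideal.subset_span (by simp [linearParameters])

theorem idealOfVars_sq_le_planesIdeal_sup :
    idealOfVars (Fin (n + 2)) K ^ 2 ≤
      planesIdeal K Finset.univ ⊔ Ideal.ofList (linearParameters n γ) ⊔
        Ideal.span {zP K n} * idealOfVars (Fin (n + 2)) K := by
  set 𝔪 := idealOfVars (Fin (n + 2)) K
  set Q := planesIdeal K Finset.univ ⊔ Ideal.ofList (linearParameters n γ) ⊔
    Ideal.span {zP K n} * 𝔪
  have hθ : ∀ f ∈ Ideal.ofList (linearParameters n γ), f ∈ Q := fun f hf ↦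
    Ideal.mem_sup_left (Ideal.mem_sup_right hf)
  have hz : ∀ g ∈ 𝔪, zP K n * g ∈ Q := fun g hg ↦
    Ideal.mem_sup_right (Ideal.mul_mem_mul (Ideal.mem_span_singleton_self _) hg)
  have hx : ∀ g ∈ 𝔪, xP K n * g ∈ Q := fun g hg ↦ by
    convert Q.add_mem (Q.mul_mem_right g (hθ _ xP_sub_zP_mem_ofList)) (hz g hg) using 1
    ring
  have hyy : ∀ i j, i ≠ j → yP K n i * yP K n j ∈ Q := fun i j hij ↦
    Ideal.mem_sup_left (Ideal.mem_sup_left (yP_mul_yP_mem_planesIdeal hij))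
  have hy_sq : ∀ i, yP K n i * yP K n i ∈ Q := fun i ↦ by
    have hsum : ∑ j ∈ Finset.univ.erase i, yP K n i * yP K n j ∈ Q :=
      Q.sum_mem fun j hj ↦ hyy i j (Finset.ne_of_mem_erase hj).symm
    convert Q.sub_mem (Q.sub_mem (Q.mul_mem_left (yP K n i) (hθ _ sum_yP_add_mem_ofList))
      (Q.mul_mem_left (C γ) (hz _ (yP_mem_idealOfVars i)))) hsum using 1
    rw [← Finset.mul_sum, ← Finset.add_sum_erase _ _ (Finset.mem_univ i)]
    ring
  have hmul_y : ∀ i, ∀ g ∈ 𝔪, yP K n i * g ∈ Q := fun i g hg ↦ by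
    rw [mul_comm]
    refine mul_mem_of_mem_idealOfVars hg (hx _ (yP_mem_idealOfVars i)) (fun j ↦ ?_)
      (hz _ (yP_mem_idealOfVars i))
    rcases eq_or_ne j i with rfl | hji
    exacts [hy_sq j, hyy j i hji]
  rw [sq, Ideal.mul_le]
  exact fun f hf g hg ↦
    mul_mem_of_mem_idealOfVars hf (hx g hg) (fun i ↦ hmul_y i g hg) (hz g hg)

/-- The linear form `γ y_p + ε c z`, where `c` is the sum of the weights. When `γ² ≠ ε c²`, it
generates all linear forms modulo `spaceIdeal p ε` and the linear parameters. -/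
noncomputable def residualForm (p : Fin n) (ε γ : K) : MvPolynomial (Fin (n + 2)) K :=
  C γ * yP K n p + C (ε * ∑ i, spaceWeight p ε i) * zP K n

theorem C_mul_yP_add_C_mul_zP_mem :
    C (∑ i, spaceWeight p ε i) * yP K n p + C γ * zP K n ∈
      spaceIdeal p ε ⊔ Ideal.ofList (linearParameters n γ) := by
  have hspace : ∑ i, (yP K n i - C (spaceWeight p ε i) * yP K n p) ∈
      spaceIdeal p ε ⊔ Ideal.ofList (linearParameters n γ) :=
    Ideal.sum_mem _ fun i _ ↦ Ideal.mem_sup_left (yP_sub_mem_spaceIdeal i)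
  convert Ideal.sub_mem _ (Ideal.mem_sup_right sum_yP_add_mem_ofList) hspace using 1
  rw [Finset.sum_sub_distrib, ← Finset.sum_mul, map_sum]
  ring

theorem idealOfVars_le_spaceIdeal_sup (h : γ ^ 2 ≠ ε * (∑ i, spaceWeight p ε i) ^ 2) :
    idealOfVars (Fin (n + 2)) K ≤
      spaceIdeal p ε ⊔ Ideal.ofList (linearParameters n γ) ⊔
        Ideal.span {residualForm p ε γ} := by
  set M := spaceIdeal p ε ⊔ Ideal.ofList (linearParameters n γ) ⊔
    Ideal.span {residualForm p ε γ}
  set c := ∑ i, spaceWeight p ε i with hc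
  have ht : C c * yP K n p + C γ * zP K n ∈ M := Ideal.mem_sup_left C_mul_yP_add_C_mul_zP_mem
  have hs : residualForm p ε γ ∈ M := Ideal.mem_sup_right (Ideal.mem_span_singleton_self _)
  have hdiv : ∀ f, C (γ ^ 2 - ε * c ^ 2) * f ∈ M → f ∈ M := fun f ↦
    (M.unit_mul_mem_iff_mem ((isUnit_iff_ne_zero.mpr (sub_ne_zero.mpr h)).map C)).mp
  have hy : yP K n p ∈ M := hdiv _ <| by
    convert M.sub_mem (M.mul_mem_left (C γ) hs) (M.mul_mem_left (C (ε * c)) ht) using 1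
    simp only [residualForm, ← hc, map_sub, map_mul, map_pow]
    ring
  have hz : zP K n ∈ M := hdiv _ <| by
    convert M.sub_mem (M.mul_mem_left (C γ) ht) (M.mul_mem_left (C c) hs) using 1
    simp only [residualForm, ← hc, map_sub, map_mul, map_pow]
    ring
  refine idealOfVars_le_of_mem ?_ (fun i ↦ ?_) hz
  · simpa using M.add_mem (Ideal.mem_sup_left (Ideal.mem_sup_right xP_sub_zP_mem_ofList)) hz
  · simpa using M.add_mem (Ideal.mem_sup_left (Ideal.mem_sup_left (yP_sub_mem_spaceIdeal i)))
      (M.mul_mem_left (C (spaceWeight p ε i)) hy)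

theorem residualForm_sq_mem :
    residualForm p ε γ ^ 2 ∈ quadricIdeal p ε ⊔ Ideal.ofList (linearParameters n γ) := by
  set Q := quadricIdeal p ε ⊔ Ideal.ofList (linearParameters n γ)
  set c := ∑ i, spaceWeight p ε i with hc
  have hquadric : quadric p ε ∈ Q :=
    Ideal.mem_sup_left (Ideal.mem_sup_right (Ideal.mem_span_singleton_self _))
  have hxz : xP K n - zP K n ∈ Q := Ideal.mem_sup_right xP_sub_zP_mem_ofList
  have hle : spaceIdeal p ε ⊔ Ideal.ofList (linearParameters n γ) ≤ Q :=
    sup_le_sup_right le_sup_left _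
  have ht : C c * yP K n p + C γ * zP K n ∈ Q := hle C_mul_yP_add_C_mul_zP_mem
  convert Q.add_mem (Q.mul_mem_left (C (γ ^ 2 - ε * c ^ 2))
    (Q.add_mem hquadric (Q.mul_mem_left (C ε * zP K n) hxz)))
    (Q.mul_mem_left (C ε * (C c * yP K n p + C γ * zP K n)) ht) using 1
  simp only [residualForm, quadric, ← hc, map_sub, map_mul, map_pow]
  ring

theorem idealOfVars_sq_le_quadricIdeal_sup (h : γ ^ 2 ≠ ε * (∑ i, spaceWeight p ε i) ^ 2) :
    idealOfVars (Fin (n + 2)) K ^ 2 ≤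
      quadricIdeal p ε ⊔ Ideal.ofList (linearParameters n γ) := by
  refine (Ideal.pow_right_mono (idealOfVars_le_spaceIdeal_sup h) 2).trans
    ((sup_pow_le _ _ 2).trans ?_)
  rw [Ideal.span_singleton_pow]
  exact sup_le (sup_le_sup_right le_sup_left _)
    ((Ideal.span_singleton_le_iff_mem _).mpr residualForm_sq_mem)

/-- The tangent vector, at the origin, to the line cut out by the linear parameters on the linear
space of `spaceIdeal p ε` is a nonzero point over the dual numbers. -/
theorem not_idealOfVars_le_quadricIdeal_sup (h : ∑ i, spaceWeight p ε i ≠ 0 ∨ γ ≠ 0) :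
    ¬idealOfVars (Fin (n + 2)) K ≤
      quadricIdeal p ε ⊔ Ideal.ofList (linearParameters n γ) := by
  intro hle
  set c := ∑ i, spaceWeight p ε i with hc
  let e : DualNumber K := DualNumber.eps
  let φ := pointEval (K := K) (-c • e) (fun i ↦ spaceWeight p ε i • γ • e) (-c • e)
  have hker : quadricIdeal p ε ⊔ Ideal.ofList (linearParameters n γ) ≤ RingHom.ker φ := by
    refine sup_le (sup_le spaceIdeal_le_ker ((Ideal.span_singleton_le_iff_mem _).mpr ?_))
      (ofList_linearParameters_le_ker ?_)
    · simp [RingHom.mem_ker, φ, e, quadric, sq]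
    · rw [← hc, smul_smul, smul_smul, ← add_smul]
      simp [mul_comm]
  have hx : c = 0 := by
    simpa [RingHom.mem_ker, φ, e] using
      congrArg TrivSqZeroExt.snd (hker (hle xP_mem_idealOfVars))
  have hy : γ = 0 := by
    simpa [RingHom.mem_ker, φ, e, spaceWeight_self] using
      congrArg TrivSqZeroExt.snd (hker (hle (yP_mem_idealOfVars p)))
  exact h.elim (· hx) (· hy)

end Powers

section Regularity

variable {p : Fin n} {ε : K} {I : Ideal (MvPolynomial (Fin (n + 2)) K)}

theorem isWeaklyRegular_of_colon_eq {γ : K} (hγ : γ ^ 2 ≠ ε * (∑ i, spaceWeight p ε i) ^ 2)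
    (hsup : I ⊔ Ideal.span {xP K n * zP K n} = planesIdeal K Finset.univ)
    (hcolon : I.colon {xP K n * zP K n} = quadricIdeal p ε) :
    RingTheory.Sequence.IsWeaklyRegular (MvPolynomial (Fin (n + 2)) K ⧸ I)
      (linearParameters n γ) := by
  refine isWeaklyRegular_quotient_of_sup_of_colon (q := xP K n * zP K n) ?_ ?_
  · rw [hsup]
    exact isWeaklyRegular_planesIdeal ⟨p, Finset.mem_univ p⟩
  · rw [hcolon]
    exact isWeaklyRegular_quadricIdeal hγ

theorem sup_linearParameters_colon (γ : K)
    (hsup : I ⊔ Ideal.span {xP K n * zP K n} = planesIdeal K Finset.univ)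
    (hcolon : I.colon {xP K n * zP K n} = quadricIdeal p ε) :
    (I ⊔ Ideal.ofList (linearParameters n γ)).colon {xP K n * zP K n} =
      quadricIdeal p ε ⊔ Ideal.ofList (linearParameters n γ) := by
  rw [sup_ofList_colon, hcolon]
  rw [hsup]
  exact isWeaklyRegular_planesIdeal ⟨p, Finset.mem_univ p⟩

theorem idealOfVars_pow_four_le {γ : K} (hγ : γ ^ 2 ≠ ε * (∑ i, spaceWeight p ε i) ^ 2)
    (hsup : I ⊔ Ideal.span {xP K n * zP K n} = planesIdeal K Finset.univ)
    (hcolon : I.colon {xP K n * zP K n} = quadricIdeal p ε) :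
    idealOfVars (Fin (n + 2)) K ^ 4 ≤ I ⊔ Ideal.ofList (linearParameters n γ) := by
  set 𝔪 := idealOfVars (Fin (n + 2)) K
  set Q := I ⊔ Ideal.ofList (linearParameters n γ)
  have hxz : xP K n * zP K n ∈ Ideal.span {zP K n} * 𝔪 := by
    rw [mul_comm (xP K n)]
    exact Ideal.mul_mem_mul (Ideal.mem_span_singleton_self _) xP_mem_idealOfVars
  have hsq : 𝔪 ^ 2 ≤ Q ⊔ Ideal.span {zP K n} * 𝔪 := by
    refine (idealOfVars_sq_le_planesIdeal_sup (γ := γ)).trans (sup_le (sup_le ?_ ?_) le_sup_right)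
    · rw [← hsup]
      exact sup_le_sup le_sup_left ((Ideal.span_singleton_le_iff_mem _).mpr hxz)
    · exact le_sup_of_le_left le_sup_right
  have hz_sq : Ideal.span {zP K n ^ 2} * 𝔪 ^ 2 ≤ Q := by
    refine Ideal.span_singleton_mul_le_iff.mpr fun f hf ↦ ?_
    have hxz : f * (xP K n * zP K n) ∈ Q := by
      have := idealOfVars_sq_le_quadricIdeal_sup hγ hf
      rwa [← sup_linearParameters_colon γ hsup hcolon, Submodule.mem_colon_singleton] at this
    convert Q.sub_mem hxz (Q.mul_mem_left (f * zP K n)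
      (Ideal.mem_sup_right xP_sub_zP_mem_ofList)) using 1
    ring
  calc 𝔪 ^ 4 = (𝔪 ^ 2) ^ 2 := (pow_mul 𝔪 2 2)
    _ ≤ (Q ⊔ Ideal.span {zP K n} * 𝔪) ^ 2 := Ideal.pow_right_mono hsq 2
    _ ≤ Q ⊔ (Ideal.span {zP K n} * 𝔪) ^ 2 := sup_pow_le _ _ 2
    _ ≤ Q := by
      rw [mul_pow, Ideal.span_singleton_pow]
      exact sup_le le_rfl hz_sq

theorem not_idealOfVars_pow_three_le {γ : K}
    (h : ∑ i, spaceWeight p ε i ≠ 0 ∨ γ ≠ 0)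
    (hsup : I ⊔ Ideal.span {xP K n * zP K n} = planesIdeal K Finset.univ)
    (hcolon : I.colon {xP K n * zP K n} = quadricIdeal p ε) :
    ¬idealOfVars (Fin (n + 2)) K ^ 3 ≤ I ⊔ Ideal.ofList (linearParameters n γ) := by
  intro hle
  refine not_idealOfVars_le_quadricIdeal_sup h fun f hf ↦ ?_
  rw [← sup_linearParameters_colon γ hsup hcolon, Submodule.mem_colon_singleton, smul_eq_mul]
  refine hle ?_
  rw [pow_succ', sq]
  exact Ideal.mul_mem_mul hf (Ideal.mul_mem_mul xP_mem_idealOfVars zP_mem_idealOfVars)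

theorem regEq_three_of_colon_eq (hI : I.IsHomogeneous (homogeneousSubmodule (Fin (n + 2)) K))
    (hsup : I ⊔ Ideal.span {xP K n * zP K n} = planesIdeal K Finset.univ)
    (hcolon : I.colon {xP K n * zP K n} = quadricIdeal p ε) : RegEq I 3 := by
  obtain ⟨γ, hγ⟩ : ∃ γ : K, γ ^ 2 ≠ ε * (∑ i, spaceWeight p ε i) ^ 2 := by
    by_cases h : ε * (∑ i, spaceWeight p ε i) ^ 2 = 0
    · exact ⟨1, by simp [h]⟩
    · exact ⟨0, by simpa [eq_comm] using h⟩
  refine regEq_of_isWeaklyRegular hI isHomogeneous_of_mem_linearParameters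
    (isWeaklyRegular_of_colon_eq hγ hsup hcolon) (idealOfVars_pow_four_le hγ hsup hcolon)
    (not_idealOfVars_pow_three_le ?_ hsup hcolon)
  by_contra! h0
  simp [h0.1, h0.2] at hγ

end Regularity

section JoinMeet

variable {i j : Fin n}

theorem yP_mul_yP_sub_mem_diamondIdeal (h : i ≠ j) :
    yP K n i * yP K n j - xP K n * zP K n ∈ diamondIdeal K n := by
  rcases lt_or_gt_of_ne h with h | h
  · exact Ideal.subset_span ⟨i, j, h, rfl⟩
  · exact Ideal.subset_span ⟨j, i, h, by rw [mul_comm (yP K n i)]⟩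

theorem isHomogeneous_diamondIdeal :
    (diamondIdeal K n).IsHomogeneous (homogeneousSubmodule (Fin (n + 2)) K) := by
  refine isHomogeneous_span ?_
  rintro _ ⟨i, j, -, rfl⟩
  exact ⟨2, ((isHomogeneous_yP i).mul (isHomogeneous_yP j)).sub
    (isHomogeneous_xP.mul isHomogeneous_zP)⟩

theorem diamondIdeal_sup_span_singleton :
    diamondIdeal K n ⊔ Ideal.span {xP K n * zP K n} = planesIdeal K Finset.univ := by
  have hxz : xP K n * zP K n ∈ diamondIdeal K n ⊔ Ideal.span {xP K n * zP K n} :=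
    Ideal.mem_sup_right (Ideal.mem_span_singleton_self _)
  apply le_antisymm
  · refine sup_le (Ideal.span_le.mpr ?_)
      ((Ideal.span_singleton_le_iff_mem _).mpr xP_mul_zP_mem_planesIdeal)
    rintro _ ⟨i, j, hij, rfl⟩
    exact Ideal.sub_mem _ (yP_mul_yP_mem_planesIdeal hij.ne) xP_mul_zP_mem_planesIdeal
  · refine planesIdeal_le hxz (fun i j hij ↦ ?_) fun j hj ↦ (hj (Finset.mem_univ j)).elim
    simpa using Ideal.add_mem _
      (Ideal.mem_sup_left (yP_mul_yP_sub_mem_diamondIdeal hij)) hxz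

theorem diamondIdeal_le_quadricIdeal (p : Fin n) : diamondIdeal K n ≤ quadricIdeal p 1 := by
  have hspace : ∀ j, yP K n j - yP K n p ∈ quadricIdeal p 1 := fun j ↦ by
    refine Ideal.mem_sup_left ?_
    convert yP_sub_mem_spaceIdeal (p := p) (ε := (1 : K)) j using 1
    simp [spaceWeight]
  have hquadric : quadric p 1 ∈ quadricIdeal p (1 : K) :=
    Ideal.mem_sup_right (Ideal.mem_span_singleton_self _)
  refine Ideal.span_le.mpr ?_
  rintro _ ⟨i, j, -, rfl⟩
  rw [SetLike.mem_coe]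
  convert Ideal.add_mem _ (Ideal.add_mem _ (Ideal.mul_mem_left _ (yP K n j) (hspace i))
    (Ideal.mul_mem_left _ (yP K n p) (hspace j))) hquadric using 1
  rw [quadric, C_1]
  ring

theorem diamondIdeal_colon (hn : 3 ≤ n) (p : Fin n) :
    (diamondIdeal K n).colon {xP K n * zP K n} = quadricIdeal p 1 := by
  set I := diamondIdeal K n
  have hyy (i j : Fin n) (h : i ≠ j) : yP K n i * yP K n j - xP K n * zP K n ∈ I :=
    yP_mul_yP_sub_mem_diamondIdeal h
  refine colon_eq_quadricIdeal (diamondIdeal_le_quadricIdeal p) (fun i _ ↦ ?_) ?_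
  · obtain ⟨j, hji, hjp⟩ := Fin.exists_ne_and_ne_of_two_lt i p hn
    convert I.sub_mem (I.mul_mem_left (yP K n p) (hyy j i hji))
      (I.mul_mem_left (yP K n i) (hyy j p hjp)) using 1
    rw [C_1]
    ring
  · obtain ⟨j, hjp, -⟩ := Fin.exists_ne_and_ne_of_two_lt p p hn
    obtain ⟨k, hkp, hkj⟩ := Fin.exists_ne_and_ne_of_two_lt p j hn
    convert I.sub_mem (I.add_mem (I.mul_mem_left (yP K n p * yP K n k) (hyy j p hjp))
      (I.mul_mem_left (xP K n * zP K n) (hyy k p hkp)))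
      (I.mul_mem_left (yP K n p ^ 2) (hyy k j hkj)) using 1
    rw [quadric, C_1]
    ring

theorem regEq_diamondIdeal (hn : 3 ≤ n) : RegEq (diamondIdeal K n) 3 :=
  regEq_three_of_colon_eq isHomogeneous_diamondIdeal diamondIdeal_sup_span_singleton
    (diamondIdeal_colon hn ⟨0, by omega⟩)

end JoinMeet

section Initial

theorem quadric_zero (p : Fin n) : quadric p (0 : K) = yP K n p ^ 2 := by
  simp [quadric]

variable (hn : 1 ≤ n)

theorem isHomogeneous_diamondIni :
    (diamondIni K n hn).IsHomogeneous (homogeneousSubmodule (Fin (n + 2)) K) := by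
  refine isHomogeneous_span ?_
  rintro _ ((⟨i, j, -, rfl⟩ | ⟨k, -, rfl⟩) | rfl)
  · exact ⟨_, (isHomogeneous_yP i).mul (isHomogeneous_yP j)⟩
  · exact ⟨_, (isHomogeneous_xP.mul (isHomogeneous_yP k)).mul isHomogeneous_zP⟩
  · exact ⟨_, (isHomogeneous_xP.mul ((isHomogeneous_yP _).pow 2)).mul isHomogeneous_zP⟩

theorem diamondIni_sup_span_singleton :
    diamondIni K n hn ⊔ Ideal.span {xP K n * zP K n} = planesIdeal K Finset.univ := by
  apply le_antisymm
  · refine sup_le (Ideal.span_le.mpr ?_)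
      ((Ideal.span_singleton_le_iff_mem _).mpr xP_mul_zP_mem_planesIdeal)
    rintro _ ((⟨i, j, hij, rfl⟩ | ⟨k, -, rfl⟩) | rfl)
    · exact yP_mul_yP_mem_planesIdeal hij.ne
    all_goals
      rw [mul_right_comm]
      exact Ideal.mul_mem_right _ _ xP_mul_zP_mem_planesIdeal
  · have hyy (i j : Fin n) (hij : i < j) : yP K n i * yP K n j ∈ diamondIni K n hn :=
      Ideal.subset_span (.inl (.inl ⟨i, j, hij, rfl⟩))
    refine planesIdeal_le (Ideal.mem_sup_right (Ideal.mem_span_singleton_self _))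
      (fun i j hij ↦ Ideal.mem_sup_left ?_) fun j hj ↦ (hj (Finset.mem_univ j)).elim
    rcases lt_or_gt_of_ne hij with h | h
    · exact hyy i j h
    · rw [mul_comm]
      exact hyy j i h

theorem diamondIni_le_quadricIdeal :
    diamondIni K n hn ≤ quadricIdeal ⟨n - 1, by omega⟩ 0 := by
  have hyp {k : Fin n} (hk : (k : ℕ) < n - 1) :
      yP K n k ∈ quadricIdeal ⟨n - 1, by omega⟩ (0 : K) :=
    Ideal.mem_sup_left (yP_mem_spaceIdeal_zero (Fin.ne_of_lt hk))
  refine Ideal.span_le.mpr ?_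
  rintro _ ((⟨i, j, hij, rfl⟩ | ⟨k, hk, rfl⟩) | rfl)
  · exact Ideal.mul_mem_right _ _ (hyp (by omega))
  · exact Ideal.mul_mem_right _ _ (Ideal.mul_mem_left _ _ (hyp hk))
  · refine Ideal.mul_mem_right _ _ (Ideal.mul_mem_left _ _ (Ideal.mem_sup_right ?_))
    rw [quadric_zero ⟨n - 1, by omega⟩]
    exact Ideal.mem_span_singleton_self _

theorem diamondIni_colon :
    (diamondIni K n hn).colon {xP K n * zP K n} = quadricIdeal ⟨n - 1, by omega⟩ 0 := by
  refine colon_eq_quadricIdeal (diamondIni_le_quadricIdeal hn) (fun k hk ↦ ?_) ?_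
  · refine Ideal.subset_span (.inl (.inr ⟨k, ?_, ?_⟩))
    · rw [Fin.ne_iff_vne] at hk
      simp only at hk
      omega
    · rw [C_0]
      ring
  · refine Ideal.subset_span (.inr ?_)
    rw [quadric_zero ⟨n - 1, by omega⟩, Set.mem_singleton_iff]
    ring

theorem regEq_diamondIni : RegEq (diamondIni K n hn) 3 :=
  regEq_three_of_colon_eq (isHomogeneous_diamondIni hn) (diamondIni_sup_span_singleton hn)
    (diamondIni_colon hn)

end Initial

end Diamond

theorem diamond_reg_three (K : Type*) [Field K] (n : ℕ) (hn : 3 ≤ n) :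
    RegEq (diamondIdeal K n) 3 ∧ RegEq (diamondIni K n (by omega)) 3 :=
  ⟨regEq_diamondIdeal hn, regEq_diamondIni (by omega)⟩
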